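/- Let φ: T → ℝ/ℤ be a continuous map of nonzero positive degree. There is a number N = N(φ) such that for all n ≥ N there is a finite pairwise disjoint collection of balls {B_i} of radius 1/n in T such that for all i, H(φ^{−1}[0] ∩ B_i) ≥ C(T) n μ(B_i), and such that the Borel function ρ = n Σ_i χ_{5B_i} is an upper gradient of a Lipschitz map ψ: T → ℝ/ℤ of degree 1; here C(T) depends only on the data of T. -/

import Mathlib

open MeasureTheory Metric Set Filter Topology
open scoped ENNReal NNReal unitInterval

noncomputable section

namespace Duality

/-! ### Rectifiable curves, line integrals and upper gradients

A rectifiable path is encoded by its arclength-type parametrization: a `1`-Lipschitz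
map defined on a compact interval `[a, b]`.  The line integral `∫_γ ρ ds` of a
nonnegative Borel function is then the Lebesgue integral of `ρ ∘ γ` over `[a, b]`. -/

structure UPath (X : Type*) [PseudoMetricSpace X] where
  a : ℝ
  b : ℝ
  hab : a ≤ b
  toFun : ℝ → X
  lip : LipschitzOnWith 1 toFun (Set.Icc a b)

namespace UPath

variable {X : Type*} [PseudoMetricSpace X]

/-- starting point of the path -/
def start (γ : UPath X) : X := γ.toFun γ.a

/-- end point of the path -/
def finish (γ : UPath X) : X := γ.toFun γ.b

/-- The line integral `∫_γ ρ ds`. -/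
def integral (γ : UPath X) (ρ : X → ℝ≥0∞) : ℝ≥0∞ :=
  ∫⁻ t in Set.Icc γ.a γ.b, ρ (γ.toFun t)

/-- The image (trace) `|γ|` of the path. -/
def trace (γ : UPath X) : Set X := γ.toFun '' Set.Icc γ.a γ.b

/-- The length of the path. -/
def length (γ : UPath X) : ℝ≥0∞ := eVariationOn γ.toFun (Set.Icc γ.a γ.b)

/-- The path stays inside the set `W`. -/
def InSet (γ : UPath X) (W : Set X) : Prop := ∀ t ∈ Set.Icc γ.a γ.b, γ.toFun t ∈ W

/-- The reparametrization of a rectifiable path as a `Path` (continuous map from `[0,1]`). -/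
def toPath (γ : UPath X) : Path γ.start γ.finish where
  toFun := fun t => γ.toFun (γ.a + (t : ℝ) * (γ.b - γ.a))
  continuous_toFun := by
    have hmem : ∀ t : unitInterval, γ.a + (t : ℝ) * (γ.b - γ.a) ∈ Set.Icc γ.a γ.b := by
      intro t
      obtain ⟨ht0, ht1⟩ := t.2
      constructor
      · nlinarith [γ.hab]
      · nlinarith [γ.hab]
    exact γ.lip.continuousOn.comp_continuous (by continuity) hmem
  source' := by simp [start]
  target' := by simp [finish]

end UPath

/-- `ρ` is an upper gradient of `u`. -/
def IsUpperGradient {X : Type*} [PseudoMetricSpace X] {Y : Type*} [PseudoEMetricSpace Y]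
    (u : X → Y) (ρ : X → ℝ≥0∞) : Prop :=
  ∀ γ : UPath X, edist (u γ.start) (u γ.finish) ≤ γ.integral ρ

/-- The `p`-modulus of a family of (rectifiable) paths. -/
def pathMod {X : Type*} [PseudoMetricSpace X] [MeasurableSpace X]
    (μ : Measure X) (p : ℝ) (Γ : Set (UPath X)) : ℝ≥0∞ :=
  ⨅ (ρ : X → ℝ≥0∞) (_ : Measurable ρ ∧ ∀ γ ∈ Γ, 1 ≤ γ.integral ρ),
    ∫⁻ x, ρ x ^ p ∂μ

/-- `ρ` is a `p`-weak upper gradient of `u`: the upper gradient inequality may fail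
only on a path family of zero `p`-modulus. -/
def IsWeakUpperGradient {X : Type*} [PseudoMetricSpace X] [MeasurableSpace X]
    {Y : Type*} [PseudoEMetricSpace Y] (μ : Measure X) (p : ℝ)
    (u : X → Y) (ρ : X → ℝ≥0∞) : Prop :=
  pathMod μ p {γ : UPath X | ¬ edist (u γ.start) (u γ.finish) ≤ γ.integral ρ} = 0

/-- `ρ` is a `p`-weak upper gradient of `u` in the subset `U`. -/
def IsWeakUpperGradientOn {X : Type*} [PseudoMetricSpace X] [MeasurableSpace X]
    {Y : Type*} [PseudoEMetricSpace Y] (μ : Measure X) (p : ℝ) (U : Set X)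
    (u : X → Y) (ρ : X → ℝ≥0∞) : Prop :=
  pathMod (μ.restrict U) p
    {γ : UPath X | γ.InSet U ∧ ¬ edist (u γ.start) (u γ.finish) ≤ γ.integral ρ} = 0

/-- `ρ` is the minimal `p`-weak upper gradient of `u`: it is a `p`-integrable `p`-weak
upper gradient which is `μ`-a.e. dominated by every other one. -/
def IsMinimalWeakUpperGradient {X : Type*} [PseudoMetricSpace X] [MeasurableSpace X]
    {Y : Type*} [PseudoEMetricSpace Y] (μ : Measure X) (p : ℝ)
    (u : X → Y) (ρ : X → ℝ≥0∞) : Prop :=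
  Measurable ρ ∧ IsWeakUpperGradient μ p u ρ ∧ (∫⁻ x, ρ x ^ p ∂μ) < ⊤ ∧
    ∀ ρ' : X → ℝ≥0∞, Measurable ρ' → IsWeakUpperGradient μ p u ρ' →
      (∫⁻ x, ρ' x ^ p ∂μ) < ⊤ → ∀ᵐ x ∂μ, ρ x ≤ ρ' x

/-! ### Doubling measures, Poincaré inequalities, Ahlfors regularity -/

/-- `μ` is a doubling (Borel) measure with doubling constant `Cμ`:
`0 < μ(2B) ≤ Cμ · μ(B) < ∞` for every ball `B` of radius `r < diam T`. -/
def IsDoubling {X : Type*} [MetricSpace X] [MeasurableSpace X]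
    (μ : Measure X) (Cμ : ℝ≥0∞) : Prop :=
  ∀ (x : X) (r : ℝ), 0 < r → r < Metric.diam (Set.univ : Set X) →
    0 < μ (ball x (2 * r)) ∧ μ (ball x (2 * r)) ≤ Cμ * μ (ball x r) ∧
      Cμ * μ (ball x r) < ⊤

/-- `(X, d, μ)` supports a weak `1`-Poincaré inequality with constants `CP`, `lP`:
`⨍_B |u - u_B| dμ ≤ CP · diam B · ⨍_{lP·B} ρ dμ` for every locally integrable `u`
and every upper gradient `ρ` of `u`, and balls have positive finite measure. -/
def SupportsPoincare {X : Type*} [MetricSpace X] [MeasurableSpace X]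
    (μ : Measure X) (CP lP : ℝ) : Prop :=
  (∀ (x : X) (r : ℝ), 0 < r → 0 < μ (ball x r) ∧ μ (ball x r) < ⊤) ∧
  ∀ (u : X → ℝ) (ρ : X → ℝ≥0∞), LocallyIntegrable u μ → Measurable ρ →
    IsUpperGradient u ρ → ∀ (x : X) (r : ℝ), 0 < r →
      (∫⁻ y in ball x r, ENNReal.ofReal |u y - ⨍ z in ball x r, u z ∂μ| ∂μ) /
          μ (ball x r) ≤
        ENNReal.ofReal (CP * Metric.diam (ball x r)) *
          ((∫⁻ y in ball x (lP * r), ρ y ∂μ) / μ (ball x (lP * r)))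

/-- `μ` is Ahlfors `q`-regular with constants `0 < aA ≤ AA`. -/
def IsAhlforsRegular {X : Type*} [MetricSpace X] [MeasurableSpace X]
    (μ : Measure X) (q aA AA : ℝ) : Prop :=
  0 < aA ∧ aA ≤ AA ∧
    ∀ (x : X) (r : ℝ), 0 < r → r < Metric.diam (Set.univ : Set X) →
      ENNReal.ofReal (aA * r ^ q) ≤ μ (ball x r) ∧
        μ (ball x r) ≤ ENNReal.ofReal (AA * r ^ q)

/-! ### The circle `ℝ/ℤ`, loops and degree -/

lemma intCast_coe_eq_zero (k : ℤ) : ((k : ℝ) : UnitAddCircle) = 0 :=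
  (AddCircle.coe_eq_zero_iff _).mpr ⟨k, by simp⟩

/-- The standard loop of degree `k` in `ℝ/ℤ` based at `y`: `t ↦ y + [k t]`. -/
def stdLoop (k : ℤ) (y : UnitAddCircle) : Path y y where
  toFun := fun t => y + (((k : ℝ) * (t : ℝ) : ℝ) : UnitAddCircle)
  continuous_toFun := by
    refine continuous_const.add ?_
    exact (AddCircle.continuous_mk' 1).comp (by continuity)
  source' := by simp
  target' := by
    have h1 : ((1 : unitInterval) : ℝ) = 1 := rfl
    have h : (((k : ℝ) * ((1 : unitInterval) : ℝ) : ℝ) : UnitAddCircle) = 0 := by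
      rw [h1, mul_one]; exact intCast_coe_eq_zero k
    simp [h]

/-- Concatenation of `n` copies of a loop. -/
def loopPow {X : Type*} [TopologicalSpace X] {x : X} (γ : Path x x) : ℕ → Path x x
  | 0 => Path.refl x
  | n + 1 => (loopPow γ n).trans γ

/-- A loop `γ` based at `x` has degree 1 (relative to the chosen generator `α₀` based
at `x₀`) if it is loop-homotopic to a conjugate `η * α₀ * η⁻¹` of `α₀`. -/
def IsDegreeOneLoop {T : Type*} [TopologicalSpace T] (x₀ : T) (α₀ : Path x₀ x₀)
    {x : T} (γ : Path x x) : Prop :=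
  ∃ η : Path x x₀, Path.Homotopic γ (η.trans (α₀.trans η.symm))

/-- A map `f : T → ℝ/ℤ` has degree `k`: it pushes every degree-1 loop based at `x`
to a loop which is loop-homotopic to `[f x] + k·β`, `β (t) = [t]`. -/
def HasDegree {T : Type*} [TopologicalSpace T] (x₀ : T) (α₀ : Path x₀ x₀)
    (f : T → UnitAddCircle) (k : ℤ) : Prop :=
  ∃ hf : Continuous f, ∀ (x : T) (γ : Path x x), IsDegreeOneLoop x₀ α₀ γ →
    Path.Homotopic (γ.map hf) (stdLoop k (f x))

/-- The class of `α₀` generates `π₁(T, x₀) ≅ ℤ`. -/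
def IsGenerator {T : Type*} [TopologicalSpace T] (x₀ : T) (α₀ : Path x₀ x₀) : Prop :=
  Function.Bijective fun k : ℤ =>
    (FundamentalGroup.fromPath (X := TopCat.of T) ⟦α₀⟧ : FundamentalGroup (TopCat.of T) x₀) ^ k

/-- `T` is semilocally simply connected. -/
def SemilocallySimplyConnected (T : Type*) [TopologicalSpace T] : Prop :=
  ∀ x : T, ∃ U ∈ 𝓝 x, ∀ γ : Path x x, (∀ t, γ t ∈ U) → Path.Homotopic γ (Path.refl x)

/-- `f` is a Lipschitz map of degree 1. -/
def DegOneLip {T : Type*} [MetricSpace T] (x₀ : T) (α₀ : Path x₀ x₀)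
    (f : T → UnitAddCircle) : Prop :=
  (∃ L : ℝ≥0, LipschitzWith L f) ∧ HasDegree x₀ α₀ f 1

/-! ### Capacity and surface modulus -/

/-- The degree 1 `p`-capacity of `T`, defined through minimal `p`-weak upper gradients:
the infimum of `∫ ρ^p dμ` over `p`-weak upper gradients `ρ` of Lipschitz degree-1 maps. -/
def cap {T : Type*} [MetricSpace T] [MeasurableSpace T] (μ : Measure T) (p : ℝ)
    (x₀ : T) (α₀ : Path x₀ x₀) : ℝ≥0∞ :=
  ⨅ (f : T → UnitAddCircle) (_ : DegOneLip x₀ α₀ f) (ρ : T → ℝ≥0∞)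
    (_ : Measurable ρ ∧ IsWeakUpperGradient μ p f ρ),
      ∫⁻ x, ρ x ^ p ∂μ

/-- The pointwise Lipschitz constant `Lip f (x)`. -/
def pLip {T : Type*} [MetricSpace T] (f : T → UnitAddCircle) (x : T) : ℝ≥0∞ :=
  Filter.limsup
    (fun r : ℝ => ⨆ y ∈ ball x r, edist (f x) (f y) / ENNReal.ofReal r) (𝓝[>] (0 : ℝ))

/-- The degree 1 `p`-capacity of `T`, defined through pointwise Lipschitz constants. -/
def capLip {T : Type*} [MetricSpace T] [MeasurableSpace T] (μ : Measure T) (p : ℝ)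
    (x₀ : T) (α₀ : Path x₀ x₀) : ℝ≥0∞ :=
  ⨅ (f : T → UnitAddCircle) (_ : DegOneLip x₀ α₀ f), ∫⁻ x, pLip f x ^ p ∂μ

/-- The codimension 1 spherical Hausdorff measure, as a set function:
`H(A) = sup_{δ>0} inf { ∑ μ(B_i)/r_i }`, the infimum being over countable covers of `A`
by balls `B_i` of radii `r_i ≤ δ`. -/
def codimH {T : Type*} [MetricSpace T] [MeasurableSpace T] (μ : Measure T)
    (A : Set T) : ℝ≥0∞ :=
  ⨆ (δ : ℝ) (_ : 0 < δ),
    ⨅ (c : ℕ → T) (r : ℕ → ℝ) (_ : ∀ i, r i ≤ δ)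
      (_ : A ⊆ ⋃ i, ball (c i) (r i)),
        ∑' i, μ (ball (c i) (r i)) / ENNReal.ofReal (r i)

/-- The integral `∫_S g dH` of `g ≥ 0` over `S` against the codimension 1 Hausdorff
measure, via the layer-cake (Choquet) formula. -/
def choquetIntegral {T : Type*} [MetricSpace T] [MeasurableSpace T] (μ : Measure T)
    (S : Set T) (g : T → ℝ≥0∞) : ℝ≥0∞ :=
  ∫⁻ t in Set.Ioi (0 : ℝ), codimH μ {x | x ∈ S ∧ ENNReal.ofReal t < g x}

/-- The family `Γ*` of all level sets `φ⁻¹[0]` of finite codimension 1 Hausdorff measure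
of continuous degree-1 maps `φ : T → ℝ/ℤ`. -/
def Surfaces {T : Type*} [MetricSpace T] [MeasurableSpace T] (μ : Measure T)
    (x₀ : T) (α₀ : Path x₀ x₀) : Set (Set T) :=
  {S | ∃ φ : T → UnitAddCircle, HasDegree x₀ α₀ φ 1 ∧ S = φ ⁻¹' {0} ∧ codimH μ S < ⊤}

/-- The surface `q`-modulus of a family of surfaces, the surfaces being equipped with the
codimension 1 Hausdorff measure. -/
def surfModOf {T : Type*} [MetricSpace T] [MeasurableSpace T] (μ : Measure T) (q : ℝ)
    (𝒮 : Set (Set T)) : ℝ≥0∞ :=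
  ⨅ (ρ : T → ℝ≥0∞) (_ : Measurable ρ ∧ ∀ S ∈ 𝒮, 1 ≤ choquetIntegral μ S ρ),
    ∫⁻ x, ρ x ^ q ∂μ

/-- The surface modulus `mod_q T`. -/
def surfMod {T : Type*} [MetricSpace T] [MeasurableSpace T] (μ : Measure T) (q : ℝ)
    (x₀ : T) (α₀ : Path x₀ x₀) : ℝ≥0∞ :=
  surfModOf μ q (Surfaces μ x₀ α₀)

/-- The family `Γ*` with the `(q-1)`-dimensional Hausdorff measure instead. -/
def SurfacesH {T : Type*} [MetricSpace T] [MeasurableSpace T] [BorelSpace T] (q : ℝ)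
    (x₀ : T) (α₀ : Path x₀ x₀) : Set (Set T) :=
  {S | ∃ φ : T → UnitAddCircle, HasDegree x₀ α₀ φ 1 ∧ S = φ ⁻¹' {0} ∧ μH[q - 1] S < ⊤}

/-- The surface modulus `mod_q T` defined through the `(q-1)`-dimensional Hausdorff
measures `H^{q-1} ⌞ S`, `S ∈ Γ*`. -/
def surfModH {T : Type*} [MetricSpace T] [MeasurableSpace T] [BorelSpace T]
    (μ : Measure T) (q pstar : ℝ) (x₀ : T) (α₀ : Path x₀ x₀) : ℝ≥0∞ :=
  ⨅ (ρ : T → ℝ≥0∞)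
    (_ : Measurable ρ ∧ ∀ S ∈ SurfacesH (T := T) q x₀ α₀, 1 ≤ ∫⁻ x in S, ρ x ∂μH[q - 1]),
      ∫⁻ x, ρ x ^ pstar ∂μ

/-- The standing assumptions 2.1. -/
def Standing {T : Type*} [MetricSpace T] [MeasurableSpace T] (μ : Measure T)
    (Cμ : ℝ≥0∞) (CP lP : ℝ) (x₀ : T) (α₀ : Path x₀ x₀) : Prop :=
  IsDoubling μ Cμ ∧ SupportsPoincare μ CP lP ∧ SemilocallySimplyConnected T ∧
    IsGenerator x₀ α₀ ∧ ∃ f : T → UnitAddCircle, DegOneLip x₀ α₀ f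

/-! ### The universal cover -/

/-- `π` is a local isometry. -/
def IsLocalIsometry {X Y : Type*} [MetricSpace X] [MetricSpace Y] (π : X → Y) : Prop :=
  ∀ x : X, ∃ ε : ℝ, 0 < ε ∧
    ∀ y ∈ ball x ε, ∀ z ∈ ball x ε, dist (π y) (π z) = dist y z

/-- `(T̃, π)` is the universal cover of `T`, with `T̃` carrying the length metric pulled
back by `π` (so that `π` is a local isometry). -/
def CoverSetup {T Tt : Type*} [MetricSpace T] [MetricSpace Tt] (π : Tt → T) : Prop :=
  IsCoveringMap π ∧ Function.Surjective π ∧ IsLocalIsometry π ∧ SimplyConnectedSpace Tt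

/-- `τ` is the deck transformation of the cover `π` determined by
`τ (γ̃ 0) = γ̃ 1` for every lift `γ̃` of every degree-1 loop `γ`. -/
def IsDeck {T Tt : Type*} [MetricSpace T] [MetricSpace Tt] (π : Tt → T)
    (x₀ : T) (α₀ : Path x₀ x₀) (τ : Tt → Tt) : Prop :=
  Continuous τ ∧ (∀ x, π (τ x) = π x) ∧
    ∀ (x : T) (γ : Path x x), IsDegreeOneLoop x₀ α₀ γ →
      ∀ γt : C(unitInterval, Tt), (∀ t, π (γt t) = γ t) → τ (γt 0) = γt 1

/-- `μ̃` is the natural lift of `μ` to the cover: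
`μ̃ (A) = ∫ #(π⁻¹(x) ∩ A) dμ (x)`. -/
def IsLiftedMeasure {T Tt : Type*} [MetricSpace T] [MeasurableSpace T]
    [MetricSpace Tt] [MeasurableSpace Tt] (π : Tt → T) (μ : Measure T)
    (μt : Measure Tt) : Prop :=
  ∀ A : Set Tt, MeasurableSet A → μt A = ∫⁻ x, ((π ⁻¹' {x} ∩ A).encard : ℝ≥0∞) ∂μ

/-! ### Newtonian spaces -/

/-- The seminorm of `N^{1,p}(U)`. -/
def NSeminorm {X : Type*} [PseudoMetricSpace X] [MeasurableSpace X] (μ : Measure X)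
    (p : ℝ) (U : Set X) (f : X → ℝ) : ℝ≥0∞ :=
  (∫⁻ x in U, ENNReal.ofReal |f x| ^ p ∂μ) ^ (1 / p) +
    ⨅ (ρ : X → ℝ≥0∞) (_ : Measurable ρ ∧ IsWeakUpperGradientOn μ p U f ρ),
      (∫⁻ x in U, ρ x ^ p ∂μ) ^ (1 / p)

/-- `f ∈ N^{1,p}_loc`. -/
def MemNloc {X : Type*} [PseudoMetricSpace X] [MeasurableSpace X] (μ : Measure X)
    (p : ℝ) (f : X → ℝ) : Prop :=
  ∀ U : Set X, IsOpen U → IsCompact (closure U) →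
    (∫⁻ x in U, ENNReal.ofReal |f x| ^ p ∂μ) < ⊤ ∧
      ∃ ρ : X → ℝ≥0∞, Measurable ρ ∧ IsWeakUpperGradientOn μ p U f ρ ∧
        (∫⁻ x in U, ρ x ^ p ∂μ) < ⊤

/-- The collection `F`: nonnegative Borel functions `ρ` on `T` such that `ρ ∘ π` is a
`p`-weak upper gradient of some `f ∈ N^{1,p}_loc (T̃)` with `f ∘ τ - f = 1` a.e. -/
def MemF {T Tt : Type*} [MetricSpace T] [MeasurableSpace T] [MetricSpace Tt]
    [MeasurableSpace Tt] (π : Tt → T) (τ : Tt → Tt) (μt : Measure Tt) (p : ℝ)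
    (ρ : T → ℝ≥0∞) : Prop :=
  Measurable ρ ∧ ∃ f : Tt → ℝ, MemNloc μt p f ∧ (∀ᵐ x ∂μt, f (τ x) - f x = 1) ∧
    IsWeakUpperGradient μt p f (ρ ∘ π)

/-- The capacity `cap_p^F T`. -/
def capF {T Tt : Type*} [MetricSpace T] [MeasurableSpace T] [MetricSpace Tt]
    [MeasurableSpace Tt] (μ : Measure T) (π : Tt → T) (τ : Tt → Tt) (μt : Measure Tt)
    (p : ℝ) : ℝ≥0∞ :=
  ⨅ (ρ : T → ℝ≥0∞) (_ : MemF π τ μt p ρ), ∫⁻ x, ρ x ^ p ∂μ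

/-! ### Miscellaneous operators -/

/-- The restricted Hardy–Littlewood maximal operator `M_R`. -/
def restrMax {T : Type*} [MetricSpace T] [MeasurableSpace T] (μ : Measure T)
    (R : ℝ≥0∞) (g : T → ℝ≥0∞) (x : T) : ℝ≥0∞ :=
  ⨆ (s : ℝ) (_ : 0 < s ∧ ENNReal.ofReal s ≤ R),
    (∫⁻ y in ball x s, g y ∂μ) / μ (ball x s)

/-- The upper Lebesgue integral. -/
def upperLintegral {Y : Type*} [MeasurableSpace Y] (ν : Measure Y)
    (F : Y → ℝ≥0∞) : ℝ≥0∞ :=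
  ⨅ (G : Y → ℝ≥0∞) (_ : Measurable G ∧ ∀ y, F y ≤ G y), ∫⁻ y, G y ∂ν

/-! ### The sets `Ω` and the functions `ψ̃`, `ζ`, `ψ` of Section 4.3 -/

/-- The set of points reachable from `A` by a rectifiable path inside `W`. -/
def reach {T : Type*} [MetricSpace T] (A W : Set T) : Set T :=
  {x | ∃ γ : UPath T, γ.start ∈ A ∧ γ.finish = x ∧ γ.InSet W}

/-- `inf_γ ∫_γ ρ ds` over rectifiable paths connecting `A` to `x` inside `W`. -/
def pathDist {T : Type*} [MetricSpace T] (ρ : T → ℝ≥0∞) (A W : Set T) (x : T) : ℝ≥0∞ :=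
  ⨅ (γ : UPath T) (_ : γ.start ∈ A ∧ γ.finish = x ∧ γ.InSet W), γ.integral ρ

open scoped Classical in
/-- The function `ψ̃`. -/
def psiTilde {T : Type*} [MetricSpace T] (ρ : T → ℝ≥0∞) (A W : Set T) (x : T) : ℝ :=
  if x ∈ reach A W then (pathDist ρ A W x).toReal else 0

/-- The function `min {1, ψ̃}`. -/
def zeta {T : Type*} [MetricSpace T] (ρ : T → ℝ≥0∞) (A W : Set T) (x : T) : ℝ :=
  min 1 (psiTilde ρ A W x)

/-- The competing admissible map `ψ = [min {1, ψ̃}] : T → ℝ/ℤ`. -/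
def psiMap {T : Type*} [MetricSpace T] (ρ : T → ℝ≥0∞) (A W : Set T) (x : T) :
    UnitAddCircle :=
  ((zeta ρ A W x : ℝ) : UnitAddCircle)

end Duality

/-!
Subtracting from `φ / k` a real-valued function gives a degree 1 map `w` with `k w = φ`, so it
suffices to find balls in which the level set `w⁻¹{0}` is large. Call a ball of radius `1/n` heavy
if the level set has codimension 1 measure at least `C n μ(B)` in it. In a ball `B` which is not
heavy, the relative isoperimetric inequality forces one of the sides `{0 ≤ w}`, `{w < 0}` of the
level set to fill most of a smaller concentric ball: otherwise the function which is `1` on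
`{0 ≤ w}` and elsewhere a cutoff of an efficient cover of the level set would violate the Poincaré
inequality. Hence off the heavy centers `G` the level set has a locally constant majority side, and
`w` differs by a real-valued function from a map which is `0` away from `G` and winds once around
the circle near `G`, through a cutoff with Lipschitz constant `n`. A maximal disjoint
family of heavy balls then provides the upper gradient.
-/

namespace Duality

section UpperGradient

variable {X Y : Type*} [PseudoMetricSpace X] [PseudoEMetricSpace Y]
  {u : X → Y} {ρ ρ' : X → ℝ≥0∞} {V : Set X}

namespace UPath

/-- The restriction of a path to a subinterval `[s, t]` of its domain. -/
def sub (γ : UPath X) {s t : ℝ} (hst : s ≤ t) (hs : γ.a ≤ s) (ht : t ≤ γ.b) : UPath X where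
  a := s
  b := t
  hab := hst
  toFun := γ.toFun
  lip := γ.lip.mono (Icc_subset_Icc hs ht)

lemma integral_sub_le (γ : UPath X) {s t : ℝ} (hst : s ≤ t) (hs : γ.a ≤ s) (ht : t ≤ γ.b)
    (ρ : X → ℝ≥0∞) : (γ.sub hst hs ht).integral ρ ≤ γ.integral ρ :=
  lintegral_mono_set (Icc_subset_Icc hs ht)

lemma InSet.sub {γ : UPath X} (hγ : γ.InSet V) {s t : ℝ} (hst : s ≤ t) (hs : γ.a ≤ s)
    (ht : t ≤ γ.b) : (γ.sub hst hs ht).InSet V :=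
  fun _ hr => hγ _ (Icc_subset_Icc hs ht hr)

lemma integral_const (γ : UPath X) (c : ℝ≥0∞) :
    γ.integral (fun _ => c) = c * ENNReal.ofReal (γ.b - γ.a) := by
  simp [integral]

lemma InSet.integral_mono {γ : UPath X} (hγ : γ.InSet V) (h : ∀ x ∈ V, ρ x ≤ ρ' x) :
    γ.integral ρ ≤ γ.integral ρ' :=
  setLIntegral_mono' measurableSet_Icc fun t ht => h _ (hγ t ht)

lemma edist_start_finish_le (γ : UPath X) :
    edist γ.start γ.finish ≤ ENNReal.ofReal (γ.b - γ.a) := by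
  have h := γ.lip (left_mem_Icc.2 γ.hab) (right_mem_Icc.2 γ.hab)
  rwa [ENNReal.coe_one, one_mul, edist_comm γ.a, edist_dist γ.b, Real.dist_eq,
    abs_of_nonneg (sub_nonneg.2 γ.hab)] at h

end UPath

/-- `ρ` is an upper gradient of `u` along the paths that stay inside `V`. -/
def IsUpperGradientOn (u : X → Y) (ρ : X → ℝ≥0∞) (V : Set X) : Prop :=
  ∀ γ : UPath X, γ.InSet V → edist (u γ.start) (u γ.finish) ≤ γ.integral ρ

lemma IsUpperGradient.isUpperGradientOn (h : IsUpperGradient u ρ) (V : Set X) :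
    IsUpperGradientOn u ρ V :=
  fun γ _ => h γ

lemma IsUpperGradient.mono (h : IsUpperGradient u ρ) (hρ : ρ ≤ ρ') : IsUpperGradient u ρ' :=
  fun γ => (h γ).trans (lintegral_mono fun _ => hρ _)

lemma IsUpperGradientOn.mono (h : IsUpperGradientOn u ρ V) (hρ : ∀ x ∈ V, ρ x ≤ ρ' x) :
    IsUpperGradientOn u ρ' V :=
  fun γ hγ => (h γ hγ).trans (hγ.integral_mono hρ)

lemma IsUpperGradientOn.edist_le (h : IsUpperGradientOn u ρ V) {γ : UPath X} (hγ : γ.InSet V)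
    {s t : ℝ} (hs : γ.a ≤ s) (hst : s ≤ t) (ht : t ≤ γ.b) :
    edist (u (γ.toFun s)) (u (γ.toFun t)) ≤ ∫⁻ r in Icc s t, ρ (γ.toFun r) :=
  h (γ.sub hst hs ht) (hγ.sub hst hs ht)

lemma setLIntegral_Icc_add_Icc (h : ℝ → ℝ≥0∞) {a b c : ℝ} (hab : a ≤ b) (hbc : b ≤ c) :
    (∫⁻ t in Icc a b, h t) + ∫⁻ t in Icc b c, h t = ∫⁻ t in Icc a c, h t := by
  rw [setLIntegral_congr (Ioc_ae_eq_Icc (a := b) (b := c)).symm,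
    ← lintegral_union measurableSet_Ioc, Icc_union_Ioc_eq_Icc hab hbc]
  exact Set.disjoint_left.2 fun t ht ht' => ht'.1.not_ge ht.2

theorem IsUpperGradient.of_locally (h : ∀ x, ∃ V ∈ 𝓝 x, IsUpperGradientOn u ρ V) :
    IsUpperGradient u ρ := by
  intro γ
  choose V hV hVρ using h
  obtain ⟨t, ht0, htm, ⟨m, hm⟩, hts⟩ := exists_monotone_Icc_subset_open_cover_Icc γ.hab
    (c := fun s : Icc γ.a γ.b => (Icc γ.a γ.b).domRestrict γ.toFun ⁻¹' interior (V (γ.toFun s)))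
    (fun s => isOpen_interior.preimage γ.lip.continuousOn.domRestrict)
    (fun s _ => mem_iUnion.2 ⟨s, mem_interior_iff_mem_nhds.2 (hV (γ.toFun s))⟩)
  have partial_sum (n : ℕ) :
      edist (u (γ.toFun γ.a)) (u (γ.toFun (t n))) ≤ ∫⁻ r in Icc γ.a (t n), ρ (γ.toFun r) := by
    induction n with
    | zero => simp [ht0]
    | succ n ih =>
      have hmono : (t n : ℝ) ≤ t (n + 1) := htm n.le_succ
      obtain ⟨s, hs⟩ := hts n
      have hsub : (γ.sub hmono (t n).2.1 (t (n + 1)).2.2).InSet (V (γ.toFun s)) := fun r hr =>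
        interior_subset (@hs ⟨r, (t n).2.1.trans hr.1, hr.2.trans (t (n + 1)).2.2⟩ hr)
      calc edist (u (γ.toFun γ.a)) (u (γ.toFun (t (n + 1))))
          ≤ edist (u (γ.toFun γ.a)) (u (γ.toFun (t n))) +
            edist (u (γ.toFun (t n))) (u (γ.toFun (t (n + 1)))) := edist_triangle _ _ _
        _ ≤ (∫⁻ r in Icc γ.a (t n), ρ (γ.toFun r)) +
            ∫⁻ r in Icc (t n : ℝ) (t (n + 1)), ρ (γ.toFun r) :=
          add_le_add ih (hVρ _ _ hsub)
        _ = _ := setLIntegral_Icc_add_Icc _ (t n).2.1 hmono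
  have total := partial_sum m
  rwa [hm m le_rfl] at total

lemma isUpperGradientOn_of_lipschitzOnWith {L : ℝ≥0} (h : LipschitzOnWith L u V)
    (hρ : ∀ x ∈ V, (L : ℝ≥0∞) ≤ ρ x) : IsUpperGradientOn u ρ V := fun γ hγ =>
  calc edist (u γ.start) (u γ.finish)
      ≤ L * edist γ.start γ.finish :=
        h (hγ _ (left_mem_Icc.2 γ.hab)) (hγ _ (right_mem_Icc.2 γ.hab))
    _ ≤ L * ENNReal.ofReal (γ.b - γ.a) := by gcongr; exact γ.edist_start_finish_le
    _ = γ.integral (fun _ => L) := (γ.integral_const L).symm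
    _ ≤ γ.integral ρ := hγ.integral_mono hρ

lemma isUpperGradient_of_locally_lipschitzOnWith
    (h : ∀ x, ∃ V ∈ 𝓝 x, ∃ L : ℝ≥0, LipschitzOnWith L u V ∧ ∀ y ∈ V, (L : ℝ≥0∞) ≤ ρ y) :
    IsUpperGradient u ρ :=
  .of_locally fun x =>
    let ⟨V, hV, _, hL, hρ⟩ := h x
    ⟨V, hV, isUpperGradientOn_of_lipschitzOnWith hL hρ⟩

lemma isUpperGradientOn_of_eq_top {X Y : Type*} [PseudoMetricSpace X] [PseudoEMetricSpace Y]
    (u : X → Y) {ρ : X → ℝ≥0∞} {V : Set X} (hρ : ∀ x ∈ V, ρ x = ⊤) :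
    IsUpperGradientOn u ρ V := by
  intro γ hγ
  rcases γ.hab.eq_or_lt with hab | hab
  · simp [UPath.start, UPath.finish, hab]
  · have htop : γ.integral (fun _ => ⊤) = ⊤ := by
      rw [γ.integral_const, ENNReal.top_mul (by simpa using hab)]
    exact le_top.trans (htop.symm.trans_le (hγ.integral_mono fun x hx => (hρ x hx).ge))

/-- Upper gradients on an open set become global ones once they are made infinite off a closed
subset. -/
lemma IsUpperGradientOn.isUpperGradient_add_top {U F : Set X} (h : IsUpperGradientOn u ρ U)
    (hU : IsOpen U) (hF : IsClosed F) (hFU : F ⊆ U) :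
    IsUpperGradient u (ρ + Fᶜ.indicator ⊤) := by
  refine .of_locally fun x => ?_
  by_cases hx : x ∈ F
  · exact ⟨U, hU.mem_nhds (hFU hx), h.mono fun y _ => le_self_add⟩
  · exact ⟨Fᶜ, hF.isOpen_compl.mem_nhds hx,
      isUpperGradientOn_of_eq_top u fun y hy => by simp [hy]⟩

lemma edist_ciSup_le {ι : Sort*} {a b : ι → ℝ} (ha : BddAbove (range a)) (hb : BddAbove (range b))
    {c : ℝ≥0∞} (h : ∀ i, edist (a i) (b i) ≤ c) : edist (⨆ i, a i) (⨆ i, b i) ≤ c := by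
  rcases isEmpty_or_nonempty ι with _ | _
  · simp
  rcases eq_or_ne c ⊤ with rfl | hc
  · exact le_top
  lift c to ℝ≥0 using hc
  simp only [← ENNReal.ofReal_coe_nnreal, edist_le_ofReal c.coe_nonneg, Real.dist_eq,
    abs_sub_le_iff, sub_le_iff_le_add'] at h ⊢
  exact ⟨ciSup_le fun i => (h i).1.trans (by gcongr; exact le_ciSup hb i),
    ciSup_le fun i => (h i).2.trans (by gcongr; exact le_ciSup ha i)⟩

lemma IsUpperGradient.iSup {ι : Sort*} {g : ι → X → ℝ} (hbdd : ∀ x, BddAbove (range fun i => g i x))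
    (hg : ∀ i, IsUpperGradient (g i) ρ) : IsUpperGradient (fun x => ⨆ i, g i x) ρ :=
  fun γ => edist_ciSup_le (hbdd _) (hbdd _) fun i => hg i γ

/-- `K` separates `P` from its complement within `V`: a path in `V` with exactly one end point
in `P` meets `K`. -/
def SeparatesIn (K P V : Set X) : Prop :=
  ∀ γ : UPath X, γ.InSet V → ¬(γ.start ∈ P ↔ γ.finish ∈ P) → ∃ t ∈ Icc γ.a γ.b, γ.toFun t ∈ K

open scoped Classical in
lemma SeparatesIn.isUpperGradientOn_piecewise {K P : Set X} (hsep : SeparatesIn K P V)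
    (hu : IsUpperGradientOn u ρ V) {c : Y} (hc : ∀ x ∈ K ∩ V, u x = c) :
    IsUpperGradientOn (P.piecewise (fun _ => c) u) ρ V := by
  intro γ hγ
  have meets (hne : ¬(γ.start ∈ P ↔ γ.finish ∈ P)) :
      ∃ t, γ.a ≤ t ∧ t ≤ γ.b ∧ u (γ.toFun t) = c := by
    obtain ⟨t, ht, htK⟩ := hsep γ hγ hne
    exact ⟨t, ht.1, ht.2, hc _ ⟨htK, hγ t ht⟩⟩
  by_cases hs : γ.start ∈ P <;> by_cases hf : γ.finish ∈ P
  · simp [hs, hf]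
  · obtain ⟨t, hat, htb, htc⟩ := meets (by tauto)
    rw [piecewise_eq_of_mem _ _ _ hs, piecewise_eq_of_notMem _ _ _ hf, ← htc]
    exact (hu.edist_le hγ hat htb le_rfl).trans (γ.integral_sub_le htb hat le_rfl ρ)
  · obtain ⟨t, hat, htb, htc⟩ := meets (by tauto)
    rw [piecewise_eq_of_notMem _ _ _ hs, piecewise_eq_of_mem _ _ _ hf, ← htc]
    exact (hu.edist_le hγ le_rfl hat htb).trans (γ.integral_sub_le hat le_rfl htb ρ)
  · rw [piecewise_eq_of_notMem _ _ _ hs, piecewise_eq_of_notMem _ _ _ hf]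
    exact hu γ hγ

end UpperGradient

lemma ofReal_mul_diam_ball_le {X : Type*} [PseudoMetricSpace X] (C : ℝ) (x : X) {r : ℝ}
    (hr : 0 ≤ r) :
    ENNReal.ofReal (C * diam (ball x r)) ≤ 2 * C.toNNReal * ENNReal.ofReal r :=
  calc ENNReal.ofReal (C * diam (ball x r))
      ≤ ENNReal.ofReal (C.toNNReal * (2 * r)) := by
        gcongr
        exacts [Real.le_coe_toNNReal C, diam_ball hr]
    _ = 2 * C.toNNReal * ENNReal.ofReal r := by
        rw [ENNReal.ofReal_mul C.toNNReal.coe_nonneg, ENNReal.ofReal_mul zero_le_two,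
          ENNReal.ofReal_coe_nnreal, ENNReal.ofReal_ofNat]
        ring

section PISpace

variable {T : Type*} [MetricSpace T] [MeasurableSpace T] {μ : Measure T} {D A : ℝ≥0} {p : ℕ}

/-- A doubling metric measure space with a weak `1`-Poincaré inequality, in normalized form: the
doubling condition holds at all scales, and the Poincaré inequality is stated without averages and
with a power of `2` as dilation factor. -/
structure IsPISpace (μ : Measure T) (D A : ℝ≥0) (p : ℕ) : Prop where
  measure_ball_pos : ∀ (x : T) {r : ℝ}, 0 < r → 0 < μ (ball x r)
  measure_ball_lt_top : ∀ (x : T) (r : ℝ), μ (ball x r) < ⊤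
  doubling : ∀ (x : T) (r : ℝ), μ (ball x (2 * r)) ≤ D * μ (ball x r)
  poincare : ∀ (u : T → ℝ) (ρ : T → ℝ≥0∞), LocallyIntegrable u μ → Measurable ρ →
    IsUpperGradient u ρ → ∀ (x : T) (r : ℝ), 0 < r →
      ∫⁻ y in ball x r, ENNReal.ofReal |u y - ⨍ z in ball x r, u z ∂μ| ∂μ ≤
        A * ENNReal.ofReal r * ∫⁻ y in ball x (2 ^ p * r), ρ y ∂μ

lemma measure_ball_two_pow_mul_le (h : ∀ (x : T) (r : ℝ), μ (ball x (2 * r)) ≤ D * μ (ball x r))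
    (x : T) (r : ℝ) (j : ℕ) : μ (ball x (2 ^ j * r)) ≤ D ^ j * μ (ball x r) := by
  induction j with
  | zero => simp
  | succ j ih =>
    calc μ (ball x (2 ^ (j + 1) * r)) = μ (ball x (2 * (2 ^ j * r))) := by rw [pow_succ', mul_assoc]
      _ ≤ D * μ (ball x (2 ^ j * r)) := h _ _
      _ ≤ D * (D ^ j * μ (ball x r)) := by gcongr
      _ = D ^ (j + 1) * μ (ball x r) := by rw [pow_succ', mul_assoc]

lemma IsDoubling.measure_ball_two_mul_le [BoundedSpace T] {Cμ : ℝ≥0∞} (h : IsDoubling μ Cμ)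
    (hpos : ∀ (x : T) (r : ℝ), 0 < r → 0 < μ (ball x r)) (x : T) (r : ℝ) :
    μ (ball x (2 * r)) ≤ max Cμ.toNNReal 1 * μ (ball x r) := by
  have dist_le (y : T) : dist y x ≤ diam (univ : Set T) :=
    dist_le_diam_of_mem (Bornology.isBounded_univ.2 ‹_›) (mem_univ y) (mem_univ x)
  have below_diam {s : ℝ} (hs : 0 < s) (hsd : s < diam (univ : Set T)) :
      μ (ball x (2 * s)) ≤ max Cμ.toNNReal 1 * μ (ball x s) := by
    obtain ⟨-, hle, hlt⟩ := h x s hs hsd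
    have hC : Cμ ≠ ⊤ := fun hC => by simp [hC, ENNReal.top_mul (hpos x s hs).ne'] at hlt
    refine hle.trans ?_
    gcongr
    exact (ENNReal.coe_toNNReal hC).symm.trans_le (ENNReal.coe_le_coe.2 (le_max_left _ _))
  rcases le_or_gt r 0 with hr | hr
  · simp [ball_eq_empty.2 (by linarith : 2 * r ≤ 0)]
  rcases lt_trichotomy r (diam (univ : Set T)) with hrd | hrd | hrd
  · exact below_diam hr hrd
  · calc μ (ball x (2 * r)) ≤ μ (ball x (2 * (3 / 4 * r))) :=
          measure_mono fun y _ => mem_ball.2 ((dist_le y).trans_lt (by linarith))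
      _ ≤ max Cμ.toNNReal 1 * μ (ball x (3 / 4 * r)) := below_diam (by linarith) (by linarith)
      _ ≤ max Cμ.toNNReal 1 * μ (ball x r) := by gcongr; linarith
  · calc μ (ball x (2 * r)) ≤ 1 * μ (ball x r) := by
          rw [one_mul]
          exact measure_mono fun y _ => mem_ball.2 ((dist_le y).trans_lt hrd)
      _ ≤ max Cμ.toNNReal 1 * μ (ball x r) := by gcongr; exact_mod_cast le_max_right _ _

lemma SupportsPoincare.measure_ball_lt_top {CP lP : ℝ} (h : SupportsPoincare μ CP lP) (x : T)
    (r : ℝ) : μ (ball x r) < ⊤ := by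
  rcases le_or_gt r 0 with hr | hr
  · simp [ball_eq_empty.2 hr]
  · exact (h.1 x r hr).2

lemma SupportsPoincare.isPISpace {CP lP : ℝ} (h : SupportsPoincare μ CP lP)
    (hdbl : ∀ (x : T) (r : ℝ), μ (ball x (2 * r)) ≤ D * μ (ball x r))
    (hlP : lP ≤ 2 ^ p) (hlP' : 0 < lP → 1 ≤ 2 ^ p * lP) :
    IsPISpace μ D (2 * CP.toNNReal * D ^ p) p := by
  refine ⟨fun x r hr => (h.1 x r hr).1, h.measure_ball_lt_top, hdbl, ?_⟩
  intro u ρ hu hρ hug x r hr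
  have hP := h.2 u ρ hu hρ hug x r hr
  rw [ENNReal.div_le_iff (h.1 x r hr).1.ne' (h.1 x r hr).2.ne] at hP
  refine hP.trans ?_
  rcases le_or_gt lP 0 with hl | hl
  · simp [ball_eq_empty.2 (mul_nonpos_of_nonpos_of_nonneg hl hr.le)]
  obtain ⟨hM, hM'⟩ := h.1 x _ (mul_pos hl hr)
  have hball : μ (ball x r) ≤ D ^ p * μ (ball x (lP * r)) := by
    refine (measure_mono (ball_subset_ball ?_)).trans (measure_ball_two_pow_mul_le hdbl x _ p)
    rw [← mul_assoc]
    exact le_mul_of_one_le_left hr.le (hlP' hl)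
  calc ENNReal.ofReal (CP * diam (ball x r)) *
        ((∫⁻ y in ball x (lP * r), ρ y ∂μ) / μ (ball x (lP * r))) * μ (ball x r)
      ≤ 2 * CP.toNNReal * ENNReal.ofReal r *
        ((∫⁻ y in ball x (2 ^ p * r), ρ y ∂μ) / μ (ball x (lP * r))) *
          (D ^ p * μ (ball x (lP * r))) := by
        gcongr
        exact ofReal_mul_diam_ball_le CP x hr.le
    _ = 2 * CP.toNNReal * ENNReal.ofReal r * D ^ p *
        ((∫⁻ y in ball x (2 ^ p * r), ρ y ∂μ) / μ (ball x (lP * r)) * μ (ball x (lP * r))) := by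
        ring
    _ = _ := by
        rw [ENNReal.div_mul_cancel hM.ne' hM'.ne]
        push_cast
        ring

theorem exists_isPISpace (Cμ : ℝ≥0∞) (CP lP : ℝ) :
    ∃ (D A : ℝ≥0) (p : ℕ), 0 < D ∧
      ∀ {T : Type*} [MetricSpace T] [MeasurableSpace T] [BoundedSpace T] {μ : Measure T},
        IsDoubling μ Cμ → SupportsPoincare μ CP lP → IsPISpace μ D A p := by
  have hpow : Tendsto (fun p : ℕ => (2 : ℝ) ^ p) atTop atTop :=
    tendsto_pow_atTop_atTop_of_one_lt one_lt_two
  obtain ⟨p, hp, hp'⟩ := ((hpow.eventually_ge_atTop lP).and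
    (hpow.eventually_ge_atTop lP⁻¹)).exists
  refine ⟨max Cμ.toNNReal 1, _, p, lt_max_of_lt_right one_pos, fun hdbl hP =>
    hP.isPISpace (fun x r => ?_) hp fun hl => (inv_le_iff_one_le_mul₀ hl).1 hp'⟩
  rw [ENNReal.coe_max, ENNReal.coe_one]
  exact hdbl.measure_ball_two_mul_le (fun x r hr => (hP.1 x r hr).1) x r

namespace IsPISpace

lemma measure_ball_two_pow_mul_le (h : IsPISpace μ D A p) (x : T) (r : ℝ) (j : ℕ) :
    μ (ball x (2 ^ j * r)) ≤ D ^ j * μ (ball x r) :=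
  Duality.measure_ball_two_pow_mul_le h.doubling x r j

lemma one_le (h : IsPISpace μ D A p) (x : T) : 1 ≤ D := by
  have hle : 1 * μ (ball x 1) ≤ D * μ (ball x 1) := by
    rw [one_mul]
    exact (measure_mono (ball_subset_ball (by norm_num))).trans (h.doubling x 1)
  exact_mod_cast (ENNReal.mul_le_mul_iff_left (h.measure_ball_pos x one_pos).ne'
    (h.measure_ball_lt_top x 1).ne).1 hle

lemma isLocallyFiniteMeasure (h : IsPISpace μ D A p) : IsLocallyFiniteMeasure μ :=
  ⟨fun x => ⟨ball x 1, ball_mem_nhds x one_pos, h.measure_ball_lt_top x 1⟩⟩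

variable [BorelSpace T]

lemma poincare_of_isUpperGradientOn (h : IsPISpace μ D A p) {u : T → ℝ} {ρ : T → ℝ≥0∞}
    (hu : LocallyIntegrable u μ) (hρ : Measurable ρ) {x : T} {r s : ℝ} (hr : 0 < r)
    (hrs : 2 ^ p * r < s) (hug : IsUpperGradientOn u ρ (ball x s)) :
    ∫⁻ y in ball x r, ENNReal.ofReal |u y - ⨍ z in ball x r, u z ∂μ| ∂μ ≤
      A * ENNReal.ofReal r * ∫⁻ y in ball x (2 ^ p * r), ρ y ∂μ := by
  have hF : IsClosed (closedBall x (2 ^ p * r)) := isClosed_closedBall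
  refine (h.poincare u _ hu (hρ.add (measurable_const.indicator hF.measurableSet.compl))
    (hug.isUpperGradient_add_top isOpen_ball hF (closedBall_subset_ball hrs)) x r hr).trans_eq ?_
  congr 1
  refine setLIntegral_congr_fun measurableSet_ball fun y hy => ?_
  simp [ball_subset_closedBall hy]

/-- A capacity estimate: as `0` and `1` cannot both be close to the mean of `u`, one of the sets
`S₀`, `S₁` carries much of the mean oscillation. -/
lemma min_measure_le (h : IsPISpace μ D A p) {u : T → ℝ} {ρ : T → ℝ≥0∞} (hu : Measurable u)
    (hu_int : LocallyIntegrable u μ) (hρ : Measurable ρ) {x : T} {r s : ℝ} (hr : 0 < r)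
    (hrs : 2 ^ p * r < s) (hug : IsUpperGradientOn u ρ (ball x s)) {S₀ S₁ : Set T}
    (hS₀ : S₀ ⊆ ball x r) (hS₁ : S₁ ⊆ ball x r) (h₀ : ∀ y ∈ S₀, u y = 0)
    (h₁ : ∀ y ∈ S₁, u y = 1) :
    min (μ S₀) (μ S₁) ≤ 2 * A * ENNReal.ofReal r * ∫⁻ y in ball x (2 ^ p * r), ρ y ∂μ := by
  set m := ⨍ z in ball x r, u z ∂μ
  have oscillation {S : Set T} (hS : S ⊆ ball x r) (hm : ∀ y ∈ S, 1 / 2 ≤ |u y - m|) :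
      μ S ≤ 2 * A * ENNReal.ofReal r * ∫⁻ y in ball x (2 ^ p * r), ρ y ∂μ :=
    calc μ S = 2 * ∫⁻ _ in S, ENNReal.ofReal (1 / 2) ∂μ := by
          rw [setLIntegral_const, one_div, ENNReal.ofReal_inv_of_pos two_pos, ENNReal.ofReal_ofNat,
            ← mul_assoc, ENNReal.mul_inv_cancel two_ne_zero ENNReal.ofNat_ne_top, one_mul]
      _ ≤ 2 * ∫⁻ y in S, ENNReal.ofReal |u y - m| ∂μ := by
          gcongr 2 * ?_
          exact setLIntegral_mono (by fun_prop) fun y hy => ENNReal.ofReal_le_ofReal (hm y hy)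
      _ ≤ 2 * ∫⁻ y in ball x r, ENNReal.ofReal |u y - m| ∂μ := by gcongr
      _ ≤ 2 * (A * ENNReal.ofReal r * ∫⁻ y in ball x (2 ^ p * r), ρ y ∂μ) := by
          gcongr
          exact h.poincare_of_isUpperGradientOn hu_int hρ hr hrs hug
      _ = _ := by ring
  rcases le_total m (1 / 2) with hm | hm
  · refine (min_le_right _ _).trans (oscillation hS₁ fun y hy => ?_)
    rw [h₁ y hy]
    exact le_trans (by linarith) (le_abs_self _)
  · refine (min_le_left _ _).trans (oscillation hS₀ fun y hy => ?_)
    rw [h₀ y hy]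
    exact le_trans (by linarith) (neg_le_abs _)

end IsPISpace

end PISpace

section Cutoff

variable {X : Type*} [PseudoMetricSpace X]

lemma isUpperGradient_thickenedIndicator {δ δ' : ℝ} (hδ : 0 < δ) (hδδ' : δ < δ') (E : Set X) :
    IsUpperGradient (fun x => (thickenedIndicator hδ E x : ℝ))
      ((thickening δ' E).indicator fun _ => ((δ.toNNReal⁻¹ : ℝ≥0) : ℝ≥0∞)) := by
  refine isUpperGradient_of_locally_lipschitzOnWith fun x => ?_
  by_cases hx : x ∈ thickening δ' E
  · refine ⟨_, isOpen_thickening.mem_nhds hx, _, fun y _ z _ =>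
      lipschitzWith_thickenedIndicator hδ E y z, fun y hy => ?_⟩
    rw [indicator_of_mem hy]
  · refine ⟨(cthickening δ E)ᶜ, isClosed_cthickening.isOpen_compl.mem_nhds fun hx' =>
      hx (cthickening_subset_thickening' (hδ.trans hδδ') hδδ' E hx'), 0, ?_, by simp⟩
    have vanishes {y : X} (hy : y ∈ (cthickening δ E)ᶜ) : thickenedIndicator hδ E y = 0 :=
      thickenedIndicator_zero hδ E fun hy' => hy (thickening_subset_cthickening δ E hy')
    intro y hy z hz
    simp [vanishes hy, vanishes hz]

lemma exists_cutoff_ball (c : X) {r : ℝ} (hr : 0 < r) :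
    ∃ g : X → ℝ, Continuous g ∧ (∀ x, g x ∈ Icc 0 1) ∧ (∀ x ∈ ball c r, g x = 1) ∧
      (∀ x ∉ ball c (2 * r), g x = 0) ∧
      IsUpperGradient g ((ball c (2 * r)).indicator fun _ => 2 / ENNReal.ofReal r) := by
  have hthick : thickening r (ball c r) ⊆ ball c (2 * r) :=
    two_mul r ▸ thickening_ball c r r
  refine ⟨fun x => thickenedIndicator (half_pos hr) (ball c r) x,
    NNReal.continuous_coe.comp (thickenedIndicator _ _).continuous,
    fun x => ⟨NNReal.coe_nonneg _, thickenedIndicator_le_one _ _ x⟩,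
    fun x hx => by simp [thickenedIndicator_one _ _ hx], fun x hx => ?_,
    (isUpperGradient_thickenedIndicator _ (half_lt_self hr) _).mono fun x => ?_⟩
  · have hx' : x ∉ thickening (r / 2) (ball c r) := fun hx' =>
      hx (hthick (thickening_mono (half_le_self hr.le) _ hx'))
    simp [thickenedIndicator_zero _ _ hx']
  · have hconst : (((r / 2).toNNReal⁻¹ : ℝ≥0) : ℝ≥0∞) = 2 / ENNReal.ofReal r := by
      rw [ENNReal.coe_inv (by simpa using hr), ← ENNReal.ofReal, ENNReal.ofReal_div_of_pos two_pos,
        ENNReal.inv_div (by simp) (by simp), ENNReal.ofReal_ofNat]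
    rw [hconst]
    exact indicator_le_indicator_of_subset hthick (fun _ => zero_le) x

lemma exists_cutoff_iUnion_ball [MeasurableSpace X] [BorelSpace X] {ι : Type*} [Countable ι]
    (c : ι → X) {r : ι → ℝ} (hr : ∀ i, 0 < r i) :
    ∃ g : X → ℝ, Measurable g ∧ (∀ x, g x ∈ Icc 0 1) ∧ (∀ x ∈ ⋃ i, ball (c i) (r i), g x = 1) ∧
      (∀ x ∉ ⋃ i, ball (c i) (2 * r i), g x = 0) ∧
      IsUpperGradient g fun x =>
        ∑' i, (ball (c i) (2 * r i)).indicator (fun _ => 2 / ENNReal.ofReal (r i)) x := by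
  choose g hgc hg01 hg1 hg0 hgρ using fun i => exists_cutoff_ball (c i) (hr i)
  have hbdd (x : X) : BddAbove (range fun i => g i x) := ⟨1, by
    rintro _ ⟨i, rfl⟩
    exact (hg01 i x).2⟩
  refine ⟨fun x => ⨆ i, g i x, .iSup fun i => (hgc i).measurable, fun x =>
    ⟨Real.iSup_nonneg fun i => (hg01 i x).1, Real.iSup_le (fun i => (hg01 i x).2) zero_le_one⟩,
    fun x hx => ?_, fun x hx => ?_, .iSup hbdd fun i => (hgρ i).mono fun x => ENNReal.le_tsum i⟩
  · obtain ⟨i, hi⟩ := mem_iUnion.1 hx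
    exact le_antisymm (Real.iSup_le (fun i => (hg01 i x).2) zero_le_one)
      ((hg1 i x hi).symm.trans_le (le_ciSup (hbdd x) i))
  · have vanishes (i : ι) : g i x = 0 := hg0 i x fun hi => hx (mem_iUnion.2 ⟨i, hi⟩)
    simp [vanishes]

end Cutoff

namespace IsPISpace

variable {T : Type*} [MetricSpace T] [MeasurableSpace T] {μ : Measure T}
  {D A : ℝ≥0} {p : ℕ} {ι : Type*} [Countable ι] {c : ι → T} {r : ι → ℝ}

lemma measure_iUnion_ball_two_mul_le (h : IsPISpace μ D A p) {ε : ℝ} (hr : ∀ i, 0 < r i)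
    (hrε : ∀ i, r i ≤ ε) :
    μ (⋃ i, ball (c i) (2 * r i)) ≤
      D * ENNReal.ofReal ε * ∑' i, μ (ball (c i) (r i)) / ENNReal.ofReal (r i) := by
  rw [← ENNReal.tsum_mul_left]
  refine (measure_iUnion_le _).trans (ENNReal.tsum_le_tsum fun i => ?_)
  calc μ (ball (c i) (2 * r i)) ≤ D * μ (ball (c i) (r i)) := h.doubling _ _
    _ = D * ENNReal.ofReal (r i) * (μ (ball (c i) (r i)) / ENNReal.ofReal (r i)) := by
        rw [mul_assoc, ENNReal.mul_div_cancel (by simpa using hr i) ENNReal.ofReal_ne_top]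
    _ ≤ D * ENNReal.ofReal ε * (μ (ball (c i) (r i)) / ENNReal.ofReal (r i)) := by
        gcongr
        exact hrε i

variable [BorelSpace T]

lemma lintegral_tsum_indicator_ball_le (h : IsPISpace μ D A p) (c : ι → T) (r : ι → ℝ) :
    ∫⁻ x, ∑' i, (ball (c i) (2 * r i)).indicator (fun _ => 2 / ENNReal.ofReal (r i)) x ∂μ ≤
      2 * D * ∑' i, μ (ball (c i) (r i)) / ENNReal.ofReal (r i) := by
  rw [lintegral_tsum fun i => (measurable_const.indicator measurableSet_ball).aemeasurable,
    ← ENNReal.tsum_mul_left]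
  refine ENNReal.tsum_le_tsum fun i => ?_
  rw [lintegral_indicator_const measurableSet_ball]
  calc 2 / ENNReal.ofReal (r i) * μ (ball (c i) (2 * r i))
      ≤ 2 / ENNReal.ofReal (r i) * (D * μ (ball (c i) (r i))) := by gcongr; exact h.doubling _ _
    _ = 2 * D * (μ (ball (c i) (r i)) / ENNReal.ofReal (r i)) := by
        simp only [div_eq_mul_inv]
        ring

/-- A relative isoperimetric inequality, with the codimension-one content of the separating set
measured along a cover. Apply the capacity estimate to the function that is `1` on `P` and a cutoff
of the cover elsewhere. -/
theorem min_measure_diff_inter_le (h : IsPISpace μ D A p) {K P : Set T} {x : T} {ε s : ℝ}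
    (hε : 0 < ε) (hεs : 2 ^ p * ε < s) (hP : MeasurableSet P)
    (hsep : SeparatesIn K P (ball x s)) (hr : ∀ i, 0 < r i) (hrε : ∀ i, r i ≤ ε)
    (hcover : K ∩ ball x s ⊆ ⋃ i, ball (c i) (r i)) :
    min (μ (ball x ε \ P)) (μ (ball x ε ∩ P)) ≤
      (4 * A + 1) * D * ENNReal.ofReal ε *
        ∑' i, μ (ball (c i) (r i)) / ENNReal.ofReal (r i) := by
  classical
  have := h.isLocallyFiniteMeasure
  set S := ∑' i, μ (ball (c i) (r i)) / ENNReal.ofReal (r i)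
  set B := ⋃ i, ball (c i) (2 * r i)
  obtain ⟨g, hgm, hg01, hg1, hg0, hgρ⟩ := exists_cutoff_iUnion_ball c hr
  set ρ := fun x => ∑' i, (ball (c i) (2 * r i)).indicator (fun _ => 2 / ENNReal.ofReal (r i)) x
  set u := P.piecewise (fun _ => 1) g
  have hum : Measurable u := measurable_const.piecewise hP hgm
  have hu1 (y : T) : ‖u y‖ ≤ ‖(1 : ℝ)‖ := by
    by_cases hy : y ∈ P
    · simp [u, hy]
    · simpa [u, hy, abs_of_nonneg (hg01 y).1] using (hg01 y).2
  have hcapacity : min (μ ((ball x ε \ P) \ B)) (μ (ball x ε ∩ P)) ≤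
      2 * A * ENNReal.ofReal ε * ∫⁻ y in ball x (2 ^ p * ε), ρ y ∂μ :=
    h.min_measure_le hum
      ((locallyIntegrable_const 1).mono hum.aestronglyMeasurable (ae_of_all _ hu1))
      (.tsum fun i => measurable_const.indicator measurableSet_ball) hε hεs
      (hsep.isUpperGradientOn_piecewise (hgρ.isUpperGradientOn _) fun y hy => hg1 y (hcover hy))
      (sdiff_subset.trans sdiff_subset) inter_subset_left
      (fun y hy => by simp [u, hy.1.2, hg0 y hy.2]) (fun y hy => by simp [u, hy.2])
  have henergy : ∫⁻ y in ball x (2 ^ p * ε), ρ y ∂μ ≤ 2 * D * S :=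
    (setLIntegral_le_lintegral _ _).trans (h.lintegral_tsum_indicator_ball_le c r)
  calc min (μ (ball x ε \ P)) (μ (ball x ε ∩ P))
      ≤ min (μ ((ball x ε \ P) \ B) + μ B) (μ (ball x ε ∩ P) + μ B) := by
        gcongr
        exacts [tsub_le_iff_right.1 le_measure_sdiff, le_self_add]
    _ = min (μ ((ball x ε \ P) \ B)) (μ (ball x ε ∩ P)) + μ B := min_add_add_right _ _ _
    _ ≤ 2 * A * ENNReal.ofReal ε * (2 * D * S) + D * ENNReal.ofReal ε * S := by
        gcongr
        exacts [hcapacity.trans (by gcongr), h.measure_iUnion_ball_two_mul_le hr hrε]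
    _ = (4 * A + 1) * D * ENNReal.ofReal ε * S := by ring

end IsPISpace

/-- A map on the real line that behaves like a unit speed path of length `L` from `x` to `y`, up to
jumps of size `ε`. -/
structure IsCoarsePath {X : Type*} [PseudoMetricSpace X] (ε : ℝ) (x y : X) (L : ℝ)
    (f : ℝ → X) : Prop where
  length_nonneg : 0 ≤ L
  start : f 0 = x
  finish : ∀ t, L ≤ t → f t = y
  dist_le : ∀ s t, dist (f s) (f t) ≤ dist s t + ε

/-- The infimum of the lengths of the `ε`-coarse paths from `x` to `z`, truncated at `M` so that it
is finite even if there are none. -/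
def coarseDist {X : Type*} [PseudoMetricSpace X] (ε M : ℝ) (x z : X) : ℝ :=
  sInf (insert M {L | ∃ f, IsCoarsePath ε x z L f})

section CoarsePath

variable {X : Type*} [MetricSpace X] {ε L M : ℝ} {x y z : X}

lemma isCoarsePath_refl (hε : 0 ≤ ε) (x : X) : IsCoarsePath ε x x 0 fun _ => x where
  length_nonneg := le_rfl
  start := rfl
  finish _ _ := rfl
  dist_le s t := by rw [dist_self]; positivity

lemma IsCoarsePath.mono_length {f : ℝ → X} (h : IsCoarsePath ε x y L f) {L' : ℝ} (hL : L ≤ L') :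
    IsCoarsePath ε x y L' f where
  length_nonneg := h.length_nonneg.trans hL
  start := h.start
  finish t ht := h.finish t (hL.trans ht)
  dist_le := h.dist_le

lemma IsCoarsePath.extend {f : ℝ → X} (h : IsCoarsePath ε x y L f) (hne : y ≠ z)
    (hyz : dist y z ≤ ε) :
    IsCoarsePath ε x z (L + dist y z) fun t => if t < L + dist y z then f t else z where
  length_nonneg := add_nonneg h.length_nonneg dist_nonneg
  start := by rw [if_pos (by linarith [h.length_nonneg, dist_pos.2 hne]), h.start]
  finish t ht := if_neg ht.not_gt
  dist_le := by
    have to_end {s t : ℝ} (ht : L + dist y z ≤ t) : dist (f s) z ≤ dist s t + ε := by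
      rw [Real.dist_eq, abs_sub_comm]
      rcases le_total L s with hs | hs
      · rw [h.finish s hs]
        exact hyz.trans (by linarith [abs_nonneg (t - s)])
      · have hsy := h.dist_le s L
        rw [h.finish L le_rfl, Real.dist_eq, abs_of_nonpos (by linarith)] at hsy
        linarith [dist_triangle (f s) y z, le_abs_self (t - s)]
    intro s t
    rcases lt_or_ge s (L + dist y z) with hs | hs <;> rcases lt_or_ge t (L + dist y z) with ht | ht
    · rw [if_pos hs, if_pos ht]
      exact h.dist_le s t
    · rw [if_pos hs, if_neg ht.not_gt]
      exact to_end ht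
    · rw [if_neg hs.not_gt, if_pos ht, dist_comm, dist_comm s]
      exact to_end hs
    · rw [if_neg hs.not_gt, if_neg ht.not_gt, dist_self]
      exact add_nonneg dist_nonneg (dist_nonneg.trans hyz)

lemma nonneg_of_mem_coarseDist_set (hM : 0 ≤ M) :
    ∀ L ∈ insert M {L | ∃ f, IsCoarsePath ε x z L f}, 0 ≤ L := by
  rintro L (rfl | ⟨f, hf⟩)
  exacts [hM, hf.length_nonneg]

lemma coarseDist_nonneg (hM : 0 ≤ M) : 0 ≤ coarseDist ε M x z :=
  le_csInf (insert_nonempty _ _) (nonneg_of_mem_coarseDist_set hM)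

lemma coarseDist_le (hM : 0 ≤ M) : coarseDist ε M x z ≤ M :=
  csInf_le ⟨0, nonneg_of_mem_coarseDist_set hM⟩ (mem_insert _ _)

lemma IsCoarsePath.coarseDist_le (hM : 0 ≤ M) {f : ℝ → X} (h : IsCoarsePath ε x z L f) :
    coarseDist ε M x z ≤ L :=
  csInf_le ⟨0, nonneg_of_mem_coarseDist_set hM⟩ (mem_insert_of_mem _ ⟨f, h⟩)

lemma coarseDist_self (hε : 0 ≤ ε) (hM : 0 ≤ M) : coarseDist ε M x x = 0 :=
  ((isCoarsePath_refl hε x).coarseDist_le hM).antisymm (coarseDist_nonneg hM)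

lemma exists_isCoarsePath_of_coarseDist_lt (h : coarseDist ε M x z < M) :
    ∃ f, IsCoarsePath ε x z M f := by
  obtain ⟨L, rfl | ⟨f, hf⟩, hLM⟩ := exists_lt_of_csInf_lt (insert_nonempty _ _) h
  exacts [absurd hLM (lt_irrefl _), ⟨f, hf.mono_length hLM.le⟩]

lemma coarseDist_le_add_dist (hM : 0 ≤ M) (hyz : dist y z ≤ ε) :
    coarseDist ε M x z ≤ coarseDist ε M x y + dist y z := by
  rw [← sub_le_iff_le_add]
  refine le_csInf (insert_nonempty _ _) ?_
  rintro L (rfl | ⟨f, hf⟩) <;> rw [sub_le_iff_le_add]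
  · exact (coarseDist_le hM).trans (le_add_of_nonneg_right dist_nonneg)
  · rcases eq_or_ne y z with rfl | hne
    · rw [dist_self, add_zero]
      exact hf.coarseDist_le hM
    · exact (hf.extend hne hyz).coarseDist_le hM

lemma lipschitzOnWith_coarseDist (hM : 0 ≤ M) (x c : X) :
    LipschitzOnWith 1 (coarseDist ε M x) (ball c (ε / 2)) := by
  refine .of_le_add fun z hz y hy => ?_
  rw [dist_comm z]
  refine coarseDist_le_add_dist hM ((dist_triangle_right y z c).trans ?_)
  linarith [mem_ball.1 hy, mem_ball.1 hz]

end CoarsePath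

section Quasiconvexity

variable {T : Type*} [MetricSpace T] [MeasurableSpace T] {μ : Measure T} {D A : ℝ≥0} {p : ℕ}

/-- The Lipschitz constant of the locally `1`-Lipschitz functions on a space with
`IsPISpace μ D A p`. -/
def lipConst (D A : ℝ≥0) (p : ℕ) : ℝ≥0 := 8 * A * D ^ (p + 5)

namespace IsPISpace

lemma exists_abs_sub_average_le (h : IsPISpace μ D A p) [OpensMeasurableSpace T] {u : T → ℝ}
    (hu : Continuous u) (hug : IsUpperGradient u fun _ => 1) {x w : T} {R : ℝ} (hR : 0 < R)
    (hw : dist w x ≤ R) :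
    ∃ z ∈ ball w (R / 8), |u z - ⨍ y in ball x (2 * R), u y ∂μ| ≤ 2 * A * D ^ (p + 5) * R := by
  have := h.isLocallyFiniteMeasure
  have hpos := (h.measure_ball_pos w (by positivity : 0 < R / 8)).ne'
  have hfin := (h.measure_ball_lt_top w (R / 8)).ne
  set c := ⨍ y in ball x (2 * R), u y ∂μ
  have hsub : ball w (R / 8) ⊆ ball x (2 * R) := ball_subset_ball' (by linarith)
  have hsub' : ball x (2 * R) ⊆ ball w (2 ^ 5 * (R / 8)) :=
    ball_subset_ball' (by linarith [dist_comm x w])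
  have hmean : ∫⁻ z in ball w (R / 8), ENNReal.ofReal |u z - c| ∂μ ≤
      ENNReal.ofReal (2 * A * D ^ (p + 5) * R) * μ (ball w (R / 8)) :=
    calc ∫⁻ z in ball w (R / 8), ENNReal.ofReal |u z - c| ∂μ
        ≤ ∫⁻ z in ball x (2 * R), ENNReal.ofReal |u z - c| ∂μ := lintegral_mono_set hsub
      _ ≤ A * ENNReal.ofReal (2 * R) * ∫⁻ _ in ball x (2 ^ p * (2 * R)), 1 ∂μ :=
          h.poincare u _ hu.locallyIntegrable measurable_const hug x _ (by positivity)
      _ ≤ A * ENNReal.ofReal (2 * R) * (D ^ p * (D ^ 5 * μ (ball w (R / 8)))) := by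
          rw [setLIntegral_one]
          gcongr
          exact (h.measure_ball_two_pow_mul_le _ _ _).trans (by
            gcongr
            exact (measure_mono hsub').trans (h.measure_ball_two_pow_mul_le _ _ _))
      _ = ENNReal.ofReal (2 * A * D ^ (p + 5) * R) * μ (ball w (R / 8)) := by
          rw [show (2 * A * D ^ (p + 5) * R : ℝ) = (A * D ^ (p + 5) : ℝ≥0) * (2 * R) by
            push_cast; ring, ENNReal.ofReal_mul NNReal.zero_le_coe, ENNReal.ofReal_coe_nnreal]
          push_cast
          ring
  obtain ⟨z, hz, hzc⟩ := exists_le_setLAverage hpos hfin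
    (f := fun z => ENNReal.ofReal |u z - c|) (by fun_prop)
  refine ⟨z, hz, (ENNReal.ofReal_le_ofReal_iff (by positivity)).1 (hzc.trans ?_)⟩
  rwa [setLAverage_eq, ENNReal.div_le_iff hpos hfin]

lemma lipschitzWith_improve (h : IsPISpace μ D A p) [OpensMeasurableSpace T] {u : T → ℝ}
    (hug : IsUpperGradient u fun _ => 1) {L : ℝ≥0} (hL : LipschitzWith L u) :
    LipschitzWith (L / 4 + lipConst D A p / 2) u := by
  refine .of_dist_le_mul fun x y => ?_
  rcases eq_or_ne x y with rfl | hne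
  · simp
  have hR : 0 < dist x y := dist_pos.2 hne
  have near_mean {w : T} (hw : dist w x ≤ dist x y) :
      |u w - ⨍ z in ball x (2 * dist x y), u z ∂μ| ≤
        L * (dist x y / 8) + 2 * A * D ^ (p + 5) * dist x y := by
    obtain ⟨z, hz, hzc⟩ := h.exists_abs_sub_average_le hL.continuous hug hR hw
    have hwz : |u w - u z| ≤ L * (dist x y / 8) :=
      (hL.dist_le_mul w z).trans (by gcongr; exact (mem_ball'.1 hz).le)
    exact (abs_sub_le _ (u z) _).trans (add_le_add hwz hzc)
  have hx := near_mean (w := x) (by simp)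
  have hy := near_mean (w := y) (dist_comm y x).le
  rw [abs_sub_comm] at hy
  calc dist (u x) (u y)
      ≤ 2 * (L * (dist x y / 8) + 2 * A * D ^ (p + 5) * dist x y) := by
        linarith [Real.dist_eq (u x) (u y),
          abs_sub_le (u x) (⨍ z in ball x (2 * dist x y), u z ∂μ) (u y)]
    _ = _ := by
        simp only [lipConst]
        push_cast
        ring

lemma lipschitzWith_of_isUpperGradient_one (h : IsPISpace μ D A p) [OpensMeasurableSpace T]
    {u : T → ℝ} (hug : IsUpperGradient u fun _ => 1) {L : ℝ≥0} (hL : LipschitzWith L u) :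
    LipschitzWith (lipConst D A p) u := by
  have iterate (n : ℕ) : LipschitzWith (L / 4 ^ n + lipConst D A p) u := by
    induction n with
    | zero => exact hL.weaken (by simp)
    | succ n ih =>
      refine (h.lipschitzWith_improve hug ih).weaken ?_
      rw [add_div, div_div, ← pow_succ, add_assoc]
      gcongr
      rw [← NNReal.coe_le_coe]
      push_cast
      linarith [(lipConst D A p).coe_nonneg]
  refine .of_dist_le_mul fun x y => ?_
  have hlim : Tendsto (fun n : ℕ => ((L : ℝ) / 4 ^ n + lipConst D A p) * dist x y) atTop
      (𝓝 ((0 + lipConst D A p) * dist x y)) :=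
    ((tendsto_const_nhds.div_atTop (tendsto_pow_atTop_atTop_of_one_lt (by norm_num))).add_const
      _).mul_const _
  rw [zero_add] at hlim
  exact ge_of_tendsto' hlim fun n => by exact_mod_cast (iterate n).dist_le_mul x y

theorem lipschitzWith_of_locally [CompactSpace T] [OpensMeasurableSpace T]
    (h : IsPISpace μ D A p) {u : T → ℝ} (hu : ∀ x, ∃ V ∈ 𝓝 x, LipschitzOnWith 1 u V) :
    LipschitzWith (lipConst D A p) u := by
  have hloc : LocallyLipschitz u := fun x => ⟨1, hu x⟩
  obtain ⟨L, hL⟩ := hloc.locallyLipschitzOn.exists_lipschitzOnWith_of_compact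
    (s := univ) isCompact_univ
  refine h.lipschitzWith_of_isUpperGradient_one ?_ (lipschitzOnWith_univ.1 hL)
  exact isUpperGradient_of_locally_lipschitzOnWith fun x =>
    let ⟨V, hV, hVu⟩ := hu x
    ⟨V, hV, 1, hVu, fun _ _ => by simp⟩

variable [CompactSpace T] [OpensMeasurableSpace T]

lemma exists_isCoarsePath (h : IsPISpace μ D A p) {ε : ℝ} (hε : 0 < ε) {x y : T} (hne : x ≠ y) :
    ∃ f, IsCoarsePath ε x y ((lipConst D A p + 1) * dist x y) f := by
  have hM : 0 ≤ (lipConst D A p + 1) * dist x y := by positivity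
  refine exists_isCoarsePath_of_coarseDist_lt ?_
  calc coarseDist ε _ x y
      = dist (coarseDist ε _ x y) (coarseDist ε _ x x) := by
        rw [coarseDist_self hε.le hM, dist_zero_right, Real.norm_of_nonneg (coarseDist_nonneg hM)]
    _ ≤ lipConst D A p * dist y x :=
        (h.lipschitzWith_of_locally fun c => ⟨_, ball_mem_nhds c (half_pos hε),
          lipschitzOnWith_coarseDist hM x c⟩).dist_le_mul y x
    _ < (lipConst D A p + 1) * dist x y := by
        rw [dist_comm]
        linarith [dist_pos.2 hne]

/-- Quasiconvexity. The curve is a limit of coarse paths along an ultrafilter. -/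
theorem exists_lipschitz_curve (h : IsPISpace μ D A p) (x y : T) :
    ∃ f : ℝ → T, LipschitzWith 1 f ∧ f 0 = x ∧ f ((lipConst D A p + 1) * dist x y) = y := by
  rcases eq_or_ne x y with rfl | hne
  · exact ⟨fun _ => x, (LipschitzWith.const x).weaken zero_le_one, rfl, rfl⟩
  choose F hF using fun n : ℕ => h.exists_isCoarsePath (Nat.one_div_pos_of_nat (n := n)) hne
  have converges (t : ℝ) :
      ∃ z, Tendsto (fun n => F n t) (hyperfilter ℕ : Filter ℕ) (𝓝 z) := by
    obtain ⟨z, -, hz⟩ := isCompact_univ.ultrafilter_le_nhds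
      ((hyperfilter ℕ).map fun n => F n t) (by simp)
    exact ⟨z, hz⟩
  choose f hf using converges
  refine ⟨f, .of_dist_le_mul fun s t => ?_, ?_, ?_⟩
  · have hlim : Tendsto (fun n : ℕ => dist s t + 1 / ((n : ℝ) + 1)) (hyperfilter ℕ : Filter ℕ)
        (𝓝 (dist s t + 0)) :=
      (tendsto_one_div_add_atTop_nhds_zero_nat.mono_left Nat.hyperfilter_le_atTop).const_add _
    rw [NNReal.coe_one, one_mul]
    exact (le_of_tendsto_of_tendsto' ((hf s).dist (hf t)) hlim fun n => (hF n).dist_le s t).trans_eq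
      (add_zero _)
  · exact tendsto_nhds_unique (hf 0) (tendsto_const_nhds.congr fun n => (hF n).start.symm)
  · exact tendsto_nhds_unique (hf _)
      (tendsto_const_nhds.congr fun n => ((hF n).finish _ le_rfl).symm)

lemma joinedIn_ball (h : IsPISpace μ D A p) {x y : T} {r : ℝ}
    (hr : (lipConst D A p + 1) * dist x y < r) : JoinedIn (ball x r) x y := by
  obtain ⟨f, hf, hf0, hf1⟩ := h.exists_lipschitz_curve x y
  set L := (lipConst D A p + 1) * dist x y
  have hL : 0 ≤ L := by positivity
  refine ⟨⟨⟨fun t => f (t * L), hf.continuous.comp (by fun_prop)⟩, by simp [hf0], by simp [hf1]⟩,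
    fun t => mem_ball.2 ?_⟩
  calc dist (f (t * L)) x ≤ dist ((t : ℝ) * L) 0 := by
        simpa [hf0] using hf.dist_le_mul (t * L) 0
    _ = t * L := by rw [dist_zero_right, Real.norm_of_nonneg (mul_nonneg t.2.1 hL)]
    _ ≤ L := mul_le_of_le_one_left hL t.2.2
    _ < r := hr

lemma pathConnectedSpace [Nonempty T] (h : IsPISpace μ D A p) : PathConnectedSpace T where
  nonempty := inferInstance
  joined _ _ := (h.joinedIn_ball (lt_add_one _)).joined

lemma locallyPathConnectedSpace (h : IsPISpace μ D A p) : LocallyPathConnectedSpace T := by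
  refine locallyPathConnectedSpace_iff_pathComponentIn_mem_nhds.2 fun x u hu hxu => ?_
  obtain ⟨r, hr, hsub⟩ := Metric.isOpen_iff.1 hu x hxu
  have hK : (0 : ℝ) < lipConst D A p + 1 := by positivity
  refine mem_of_superset (ball_mem_nhds x (div_pos hr hK)) fun y hy => ?_
  rw [mem_ball', lt_div_iff₀' hK] at hy
  exact (h.joinedIn_ball hy).mono hsub

end IsPISpace

end Quasiconvexity

section Degree

lemma homotopic_add {G : Type*} [TopologicalSpace G] [Add G] [ContinuousAdd G] {a₁ b₁ a₂ b₂ : G}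
    {p p' : Path a₁ b₁} {q q' : Path a₂ b₂} (hp : p.Homotopic p') (hq : q.Homotopic q') :
    (p.add q).Homotopic (p'.add q') :=
  Path.Homotopic.map (hp.map2 Path.Homotopic.prodHomotopy hq) ⟨_, continuous_add⟩

lemma stdLoop_add_stdLoop (k l : ℤ) (y z : UnitAddCircle) :
    (stdLoop k y).add (stdLoop l z) = stdLoop (k + l) (y + z) := by
  ext t
  simp only [stdLoop, Path.add_apply, Path.coe_mk_mk, Int.cast_add, add_mul, AddCircle.coe_add]
  exact add_add_add_comm _ _ _ _

lemma stdLoop_map_zsmul (m k : ℤ) (y : UnitAddCircle) :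
    (stdLoop k y).map (continuous_zsmul m) = stdLoop (m * k) (m • y) := by
  ext t
  simp [stdLoop, mul_assoc, smul_add]

lemma stdLoop_zero (y : UnitAddCircle) : stdLoop 0 y = Path.refl y := by
  ext t
  simp [stdLoop]

variable {T : Type*} [TopologicalSpace T] {x₀ : T} {α₀ : Path x₀ x₀}
  {f g : T → UnitAddCircle} {k l : ℤ}

lemma HasDegree.add (hf : HasDegree x₀ α₀ f k) (hg : HasDegree x₀ α₀ g l) :
    HasDegree x₀ α₀ (f + g) (k + l) :=
  ⟨hf.1.add hg.1, fun x γ hγ =>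
    stdLoop_add_stdLoop k l _ _ ▸ homotopic_add (hf.2 x γ hγ) (hg.2 x γ hγ)⟩

lemma HasDegree.zsmul (hf : HasDegree x₀ α₀ f k) (m : ℤ) : HasDegree x₀ α₀ (m • f) (m * k) :=
  ⟨hf.1.zsmul m, fun x γ hγ =>
    stdLoop_map_zsmul m k _ ▸ (hf.2 x γ hγ).map ⟨_, continuous_zsmul m⟩⟩

lemma hasDegree_zero_coe {u : T → ℝ} (hu : Continuous u) :
    HasDegree x₀ α₀ (fun x => (u x : UnitAddCircle)) 0 :=
  ⟨(AddCircle.continuous_mk' 1).comp hu, fun x γ _ =>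
    stdLoop_zero (u x : UnitAddCircle) ▸
      (SimplyConnectedSpace.paths_homotopic (γ.map hu) (Path.refl (u x))).map
        ⟨_, AddCircle.continuous_mk' 1⟩⟩

lemma isDegreeOneLoop_self : IsDegreeOneLoop x₀ α₀ α₀ := by
  refine ⟨Path.refl x₀, ?_⟩
  rw [← Path.Homotopic.Quotient.eq]
  simp [Path.Homotopic.Quotient.mk_trans]

theorem HasDegree.exists_lift [PathConnectedSpace T] [LocallyPathConnectedSpace T]
    (hf : HasDegree x₀ α₀ f 0) (hgen : IsGenerator x₀ α₀) :
    ∃ u : T → ℝ, Continuous u ∧ ∀ x, (u x : UnitAddCircle) = f x := by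
  obtain ⟨hfc, hf⟩ := hf
  let F : C(T, UnitAddCircle) := ⟨f, hfc⟩
  have kills_generator : FundamentalGroup.map F x₀ (FundamentalGroup.fromPath ⟦α₀⟧) = 1 :=
    Quotient.sound (stdLoop_zero (f x₀) ▸ hf x₀ α₀ isDegreeOneLoop_self)
  have map_eq_one (q : FundamentalGroup T x₀) : FundamentalGroup.map F x₀ q = 1 := by
    obtain ⟨j, rfl : (FundamentalGroup.fromPath ⟦α₀⟧ : FundamentalGroup T x₀) ^ j = q⟩ := hgen.2 q
    rw [map_zpow, kills_generator, one_zpow]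
  obtain ⟨e, he⟩ := QuotientAddGroup.mk_surjective (f x₀)
  have hle : (FundamentalGroup.map F x₀).range ≤ (FundamentalGroup.mapOfEq
      (⟨_, AddCircle.continuous_mk' 1⟩ : C(ℝ, UnitAddCircle)) he).range := by
    rintro _ ⟨q, rfl⟩
    rw [map_eq_one]
    exact one_mem _
  obtain ⟨u, ⟨-, hu⟩, -⟩ :=
    (AddCircle.isCoveringMap_coe (1 : ℝ)).existsUnique_continuousMap_lifts_of_range_le he hle
  exact ⟨u, u.continuous, congrFun hu⟩

/-- If `φ = k f + [g]` with `k ≠ 0`, then `f + [g / k]` is a `k`-th root of `φ`. -/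
theorem HasDegree.exists_root [PathConnectedSpace T] [LocallyPathConnectedSpace T]
    (hf : HasDegree x₀ α₀ f 1) (hg : HasDegree x₀ α₀ g k) (hgen : IsGenerator x₀ α₀)
    (hk : k ≠ 0) : ∃ w : T → UnitAddCircle, HasDegree x₀ α₀ w 1 ∧ k • w = g := by
  have hdiff : HasDegree x₀ α₀ (g + (-k) • f) 0 := by
    simpa using hg.add (hf.zsmul (-k))
  obtain ⟨u, hu, hug⟩ := hdiff.exists_lift hgen
  refine ⟨_, hf.add (hasDegree_zero_coe (hu.div_const (k : ℝ))), ?_⟩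
  ext x
  have hkx : (k : ℝ) * (u x / k) = u x := mul_div_cancel₀ _ (Int.cast_ne_zero.2 hk)
  simp only [Pi.smul_apply, Pi.add_apply, smul_add, ← AddCircle.coe_zsmul, zsmul_eq_mul, hkx, hug,
    neg_smul, Pi.neg_apply]
  abel

end Degree

section Angle

/-- The representative in `[-1/2, 1/2)` of a point of `ℝ/ℤ`. Its sign tells apart the two sides of
`0` on the circle, and it is discontinuous at the antipode `1/2`. -/
def angle (y : UnitAddCircle) : ℝ := AddCircle.equivIco 1 (-1 / 2) y

lemma coe_angle (y : UnitAddCircle) : (angle y : UnitAddCircle) = y :=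
  (AddCircle.equivIco 1 (-1 / 2)).symm_apply_apply y

lemma angle_mem_Ico (y : UnitAddCircle) : angle y ∈ Ico (-1 / 2 : ℝ) (1 / 2) := by
  have h := (AddCircle.equivIco (1 : ℝ) (-1 / 2) y).2
  exact ⟨h.1, h.2.trans_le (by norm_num)⟩

lemma angle_coe {t : ℝ} (ht : t ∈ Ico (-1 / 2 : ℝ) (1 / 2)) : angle (t : UnitAddCircle) = t :=
  AddCircle.equivIco_coe_of_mem ⟨ht.1, ht.2.trans_le (by norm_num)⟩

lemma abs_angle (y : UnitAddCircle) : |angle y| = ‖y‖ := by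
  conv_rhs => rw [← coe_angle y]
  obtain ⟨h₁, h₂⟩ := angle_mem_Ico y
  refine ((AddCircle.norm_coe_eq_abs_iff 1 one_ne_zero).2 ?_).symm
  rw [abs_one, abs_le]
  constructor <;> linarith

lemma angle_eq_zero {y : UnitAddCircle} : angle y = 0 ↔ y = 0 := by
  rw [← abs_eq_zero, abs_angle, norm_eq_zero]

lemma continuousAt_angle {y : UnitAddCircle} (hy : ‖y‖ < 1 / 2) : ContinuousAt angle y := by
  have hne : y ≠ ((-1 / 2 : ℝ) : UnitAddCircle) := by
    rintro rfl
    rw [← abs_angle, angle_coe ⟨le_rfl, by norm_num⟩] at hy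
    norm_num at hy
  exact continuous_subtype_val.continuousAt.comp (AddCircle.continuousAt_equivIco 1 (-1 / 2) hne)

lemma measurable_angle : Measurable angle :=
  measurable_subtype_coe.comp (AddCircle.measurableEquivIco 1 (-1 / 2)).measurable

lemma angle_add {y z : UnitAddCircle} (h : angle y + angle z ∈ Ico (-1 / 2 : ℝ) (1 / 2)) :
    angle (y + z) = angle y + angle z := by
  rw [← angle_coe h, AddCircle.coe_add, coe_angle, coe_angle]

lemma angle_nonneg_iff_of_dist_lt {y z : UnitAddCircle} (h₀ : dist y z < ‖y‖)
    (h₁ : dist y z < 1 / 2 - ‖y‖) : 0 ≤ angle y ↔ 0 ≤ angle z := by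
  rw [dist_eq_norm, norm_sub_rev, ← abs_angle, ← abs_angle] at h₀ h₁
  have hsum : angle z = angle y + angle (z - y) := by
    rw [← angle_add, add_sub_cancel]
    have := (abs_add_le (angle y) (angle (z - y))).trans_lt (lt_tsub_iff_left.1 h₁)
    exact ⟨by linarith [(abs_lt.1 this).1], (abs_lt.1 this).2⟩
  rw [hsum]
  rcases abs_cases (angle y) with ⟨_, _⟩ | ⟨_, _⟩ <;>
    rcases abs_cases (angle (z - y)) with ⟨_, _⟩ | ⟨_, _⟩ <;>
    constructor <;> intro <;> linarith

/-- Subtracting the angle from `1` on the nonnegative side moves its jump from the antipode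
to `0`. -/
lemma continuousAt_ite_sub_angle {y : UnitAddCircle} (hy : y ≠ 0) :
    ContinuousAt (fun y => (if 0 ≤ angle y then 1 else 0) - angle y) y := by
  have hrep (z : UnitAddCircle) : (if 0 ≤ angle z then 1 else 0) - angle z =
      1 - (AddCircle.equivIco (1 : ℝ) 0 z : ℝ) := by
    obtain ⟨h₁, h₂⟩ := angle_mem_Ico z
    conv_rhs => rw [← coe_angle z, AddCircle.coe_equivIco_mk_apply, div_one, mul_one]
    split_ifs with h
    · rw [Int.fract_eq_self.2 ⟨h, by linarith⟩]
    · rw [Int.fract_eq_iff (b := angle z + 1) |>.2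
        ⟨by linarith, by linarith, -1, by push_cast; ring⟩]
      ring
  simp only [hrep]
  exact continuousAt_const.sub <| continuous_subtype_val.continuousAt.comp <|
    AddCircle.continuousAt_equivIco 1 0 hy

end Angle

section Unfolding

open scoped Classical in
/-- The function with two sheets, equal to `1` on `Q` and to `0` off `Q` where `τ = 0`, the sheets
meeting at the value `1/2` where `τ = 1`. -/
def sheet {T : Type*} (Q : Set T) (τ : T → ℝ) (x : T) : ℝ :=
  if x ∈ Q then 1 - τ x / 2 else τ x / 2

lemma coe_sheet_eq_zero {T : Type*} (Q : Set T) {τ : T → ℝ} {x : T} (hx : τ x = 0) :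
    (sheet Q τ x : UnitAddCircle) = 0 := by
  unfold sheet
  split_ifs <;> simp [hx]

lemma abs_sheet_sub_sheet {T : Type*} {Q : Set T} {τ : T → ℝ} {x y : T}
    (h : τ x = 1 ∨ τ y = 1 ∨ (x ∈ Q ↔ y ∈ Q)) :
    |sheet Q τ x - sheet Q τ y| = |τ x - τ y| / 2 := by
  rw [← abs_of_pos (two_pos (α := ℝ)), ← abs_div, abs_eq_abs]
  unfold sheet
  by_cases hx : x ∈ Q <;> by_cases hy : y ∈ Q <;>
    simp only [hx, hy, if_true, if_false, iff_true, iff_false, or_false, or_true,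
      not_true] at h ⊢
  · right; ring
  · rcases h with h | h <;> rw [h] <;> [left; right] <;> ring
  · rcases h with h | h <;> rw [h] <;> [right; left] <;> ring
  · left; ring

variable {T : Type*} [MetricSpace T] {w : T → UnitAddCircle} {G Q : Set T} {δ : ℝ}

/-- `Q` is a consistent choice of the positive side of the level set `w⁻¹{0}` away from `G`: far
from the level set it is dictated by the sign of the angle, and near the level set it is locally
constant off `G`. The thresholds overlap so that the two regimes can be glued. -/
structure IsSideOff (w : T → UnitAddCircle) (δ : ℝ) (G Q : Set T) : Prop where
  norm_lt : ∀ x ∈ thickening δ G, ‖w x‖ < 1 / 4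
  mem_iff : ∀ x, 1 / 4 ≤ ‖w x‖ → (x ∈ Q ↔ 0 ≤ angle (w x))
  locally_const : ∀ x, ‖w x‖ < 3 / 8 → ∃ V ∈ 𝓝 x, ∀ y ∈ V \ G, ∀ z ∈ V \ G, y ∈ Q ↔ z ∈ Q

/-- The function descending through `1/2` from the sheet `1` on `Q` to the sheet `0` off `Q`
within `δ / 2` of `G`. -/
def unfolding (Q G : Set T) (hδ : 0 < δ) : T → ℝ :=
  sheet Q fun x => thickenedIndicator (half_pos hδ) G x

lemma eventually_thickenedIndicator_half_eq_zero (hδ : 0 < δ) {x : T} (hx : x ∉ thickening δ G) :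
    ∀ᶠ y in 𝓝 x, (thickenedIndicator (half_pos hδ) G y : ℝ) = 0 := by
  have hmem : x ∈ (cthickening (δ / 2) G)ᶜ := fun hx' =>
    hx (cthickening_subset_thickening' hδ (half_lt_self hδ) G hx')
  filter_upwards [isClosed_cthickening.isOpen_compl.mem_nhds hmem] with y hy
  rw [NNReal.coe_eq_zero]
  exact thickenedIndicator_zero _ G fun hy' => hy (thickening_subset_cthickening _ G hy')

namespace IsSideOff

lemma exists_lipschitzOnWith_unfolding (h : IsSideOff w δ G Q) (hδ : 0 < δ) {x : T}
    (hx : ‖w x‖ < 3 / 8) :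
    ∃ V ∈ 𝓝 x, LipschitzOnWith δ⁻¹.toNNReal (unfolding Q G hδ) V := by
  obtain ⟨V, hV, hVQ⟩ := h.locally_const x hx
  refine ⟨V, hV, .of_dist_le_mul fun y hy z hz => ?_⟩
  have hside : (thickenedIndicator (half_pos hδ) G y : ℝ) = 1 ∨
      (thickenedIndicator (half_pos hδ) G z : ℝ) = 1 ∨ (y ∈ Q ↔ z ∈ Q) := by
    by_cases hyG : y ∈ G
    · simp [thickenedIndicator_one (half_pos hδ) G hyG]
    by_cases hzG : z ∈ G
    · simp [thickenedIndicator_one (half_pos hδ) G hzG]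
    exact .inr (.inr (hVQ y ⟨hy, hyG⟩ z ⟨hz, hzG⟩))
  have hlip := (lipschitzWith_thickenedIndicator (half_pos hδ) G).dist_le_mul y z
  rw [NNReal.dist_eq, NNReal.coe_inv, Real.coe_toNNReal _ (half_pos hδ).le] at hlip
  rw [Real.dist_eq, unfolding, abs_sheet_sub_sheet hside, Real.coe_toNNReal _ (inv_pos.2 hδ).le]
  calc _ ≤ (δ / 2)⁻¹ * dist y z / 2 := by gcongr
    _ = δ⁻¹ * dist y z := by field_simp

lemma continuous_unfolding_sub_angle (h : IsSideOff w δ G Q) (hw : Continuous w) (hδ : 0 < δ) :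
    Continuous fun x => unfolding Q G hδ x - angle (w x) := by
  refine continuous_iff_continuousAt.2 fun x => ?_
  rcases lt_or_ge ‖w x‖ (3 / 8) with hx | hx
  · obtain ⟨V, hV, hlip⟩ := h.exists_lipschitzOnWith_unfolding hδ hx
    exact (hlip.continuousOn.continuousAt hV).sub
      ((continuousAt_angle (by linarith)).comp hw.continuousAt)
  have hfar : ∀ᶠ y in 𝓝 x, 1 / 4 < ‖w y‖ :=
    hw.norm.continuousAt.eventually_const_lt (by linarith)
  have hzero : w x ≠ 0 := norm_pos_iff.1 (by linarith)
  refine ((continuousAt_ite_sub_angle hzero).comp hw.continuousAt).congr ?_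
  filter_upwards [hfar, eventually_thickenedIndicator_half_eq_zero hδ (G := G)
    fun hxG => (h.norm_lt x hxG).not_ge (by linarith)] with y hy hτ
  simp only [Function.comp_apply, unfolding, sheet, hτ, h.mem_iff y hy.le, zero_div, sub_zero]

lemma exists_lipschitzOnWith_coe_unfolding (h : IsSideOff w δ G Q) (hδ : 0 < δ) (x : T) :
    ∃ V ∈ 𝓝 x, ∃ L : ℝ≥0, LipschitzOnWith L (fun x => (unfolding Q G hδ x : UnitAddCircle)) V ∧
      ∀ y ∈ V, (L : ℝ≥0∞) ≤ (thickening δ G).indicator (fun _ => ENNReal.ofReal δ⁻¹) y := by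
  by_cases hx : x ∈ thickening δ G
  · obtain ⟨V, hV, hlip⟩ :=
      h.exists_lipschitzOnWith_unfolding hδ ((h.norm_lt x hx).trans (by norm_num))
    refine ⟨_, inter_mem hV (isOpen_thickening.mem_nhds hx), _,
      .of_dist_le_mul fun y hy z hz => ?_, fun y hy => by rw [indicator_of_mem hy.2]; rfl⟩
    rw [dist_eq_norm, ← AddCircle.coe_sub]
    exact QuotientAddGroup.norm_mk_le_norm.trans (hlip.dist_le_mul y hy.1 z hz.1)
  · have hzero : ∀ᶠ y in 𝓝 x, (unfolding Q G hδ y : UnitAddCircle) = 0 :=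
      (eventually_thickenedIndicator_half_eq_zero hδ hx).mono fun _ hy =>
        coe_sheet_eq_zero Q (τ := fun z => thickenedIndicator (half_pos hδ) G z) hy
    refine ⟨_, hzero, 0, fun y hy z hz => ?_, by simp⟩
    exact (edist_eq_zero.2 (hy.trans hz.symm)).trans_le zero_le

/-- The unfolding differs from `w` by a real-valued function, hence has the same degree. -/
theorem exists_lipschitz_hasDegree [CompactSpace T] (h : IsSideOff w δ G Q) (hδ : 0 < δ) {x₀ : T}
    {α₀ : Path x₀ x₀} {k : ℤ} (hw : HasDegree x₀ α₀ w k) :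
    ∃ ψ : T → UnitAddCircle, (∃ L : ℝ≥0, LipschitzWith L ψ) ∧ HasDegree x₀ α₀ ψ k ∧
      IsUpperGradient ψ ((thickening δ G).indicator fun _ => ENNReal.ofReal δ⁻¹) := by
  refine ⟨fun x => (unfolding Q G hδ x : UnitAddCircle), ?_, ?_,
    isUpperGradient_of_locally_lipschitzOnWith (h.exists_lipschitzOnWith_coe_unfolding hδ)⟩
  · have hloc : LocallyLipschitz fun x => (unfolding Q G hδ x : UnitAddCircle) := fun x =>
      let ⟨V, hV, L, hL, _⟩ := h.exists_lipschitzOnWith_coe_unfolding hδ x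
      ⟨L, V, hV, hL⟩
    simpa only [lipschitzOnWith_univ] using
      hloc.locallyLipschitzOn.exists_lipschitzOnWith_of_compact isCompact_univ
  · have hdeg := hw.add (hasDegree_zero_coe (h.continuous_unfolding_sub_angle hw.1 hδ))
    simpa only [Pi.add_def, AddCircle.coe_sub, coe_angle, add_sub_cancel, add_zero] using hdeg

end IsSideOff

end Unfolding

section HeavyBalls

/-- All of `B` but a fraction `θ` of its measure lies in `P`. -/
def MostlyIn {T : Type*} [MeasurableSpace T] (μ : Measure T) (θ : ℝ≥0∞) (B P : Set T) : Prop :=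
  μ (B \ P) ≤ θ * μ B

lemma mostlyIn_of_subset {T : Type*} [MeasurableSpace T] {μ : Measure T} {θ : ℝ≥0∞} {B P : Set T}
    (h : B ⊆ P) : MostlyIn μ θ B P := by
  rw [MostlyIn, sdiff_eq_empty.2 h, measure_empty]
  exact zero_le

variable {T : Type*} [MetricSpace T] [MeasurableSpace T] {μ : Measure T}

lemma codimH_mono (μ : Measure T) {S S' : Set T} (h : S ⊆ S') : codimH μ S ≤ codimH μ S' :=
  iSup₂_mono fun _ _ => iInf₂_mono fun _ _ => iInf_mono fun _ =>
    le_iInf fun h' => iInf_le_of_le (h.trans h') le_rfl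

lemma codimH_empty [Nonempty T] (μ : Measure T) : codimH μ ∅ = 0 := by
  simp only [codimH, ENNReal.iSup_eq_zero]
  intro δ hδ
  rw [← nonpos_iff_eq_zero]
  refine iInf_le_of_le (fun _ => Classical.arbitrary T) (iInf_le_of_le (fun _ => 0)
    (iInf_le_of_le (fun _ => hδ.le) (iInf_le_of_le (empty_subset _) ?_)))
  simp

lemma exists_cover_of_codimH_lt {S : Set T} {M : ℝ≥0∞} (h : codimH μ S < M) {δ : ℝ} (hδ : 0 < δ) :
    ∃ (ι : Type) (_ : Countable ι) (c : ι → T) (r : ι → ℝ), (∀ i, 0 < r i) ∧ (∀ i, r i ≤ δ) ∧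
      S ⊆ ⋃ i, ball (c i) (r i) ∧ ∑' i, μ (ball (c i) (r i)) / ENNReal.ofReal (r i) < M := by
  have hδM := (le_iSup₂ (f := fun (δ : ℝ) (_ : 0 < δ) =>
    ⨅ (c : ℕ → T) (r : ℕ → ℝ) (_ : ∀ i, r i ≤ δ) (_ : S ⊆ ⋃ i, ball (c i) (r i)),
      ∑' i, μ (ball (c i) (r i)) / ENNReal.ofReal (r i)) δ hδ).trans_lt h
  simp only [iInf_lt_iff] at hδM
  obtain ⟨c, r, hr, hc, hlt⟩ := hδM
  refine ⟨{i // 0 < r i}, inferInstance, fun i => c i, fun i => r i, Subtype.prop, fun i => hr i,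
    fun x hx => ?_, (ENNReal.tsum_comp_le_tsum_of_injective Subtype.val_injective
      fun i => μ (ball (c i) (r i)) / ENNReal.ofReal (r i)).trans_lt hlt⟩
  obtain ⟨i, hi⟩ := mem_iUnion.1 (hc hx)
  exact mem_iUnion.2 ⟨⟨i, pos_of_mem_ball hi⟩, hi⟩

/-- The centers of those balls of radius `R` in which the codimension 1 measure of `S` is at least
`C` times the natural scale `μ(B)/R`. -/
def heavyCenters (μ : Measure T) (C : ℝ≥0∞) (S : Set T) (R : ℝ) : Set T :=
  {x | C * (μ (ball x R) / ENNReal.ofReal R) ≤ codimH μ (S ∩ ball x R)}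

lemma inter_ball_nonempty_of_mem_heavyCenters {C : ℝ≥0∞} (hC : C ≠ 0) {S : Set T} {R : ℝ} {x : T}
    (hpos : 0 < μ (ball x R)) (hx : x ∈ heavyCenters μ C S R) : (S ∩ ball x R).Nonempty := by
  have : Nonempty T := ⟨x⟩
  by_contra hempty
  have hle : C * (μ (ball x R) / ENNReal.ofReal R) ≤ 0 := by
    rw [← codimH_empty μ, ← not_nonempty_iff_eq_empty.1 hempty]
    exact hx
  exact hle.not_gt (ENNReal.mul_pos hC (ENNReal.div_pos hpos.ne' ENNReal.ofReal_ne_top).ne')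

/-- The lower bound for the density of level sets in heavy balls. -/
def levelConst (D A : ℝ≥0) (p : ℕ) : ℝ≥0 := (4 * (4 * A + 1) * D ^ (p + 4))⁻¹

lemma levelConst_pos {D : ℝ≥0} (hD : 0 < D) (A : ℝ≥0) (p : ℕ) : 0 < levelConst D A p := by
  unfold levelConst
  positivity

lemma mul_levelConst_mul {D : ℝ≥0} (hD : 0 < D) (A : ℝ≥0) (p : ℕ) :
    (4 * A + 1) * D * levelConst D A p * D ^ (p + 1) = ((4 * D ^ 2)⁻¹ : ℝ≥0∞) := by
  have : (4 * A + 1) * D * levelConst D A p * D ^ (p + 1) = (4 * D ^ 2)⁻¹ := by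
    rw [levelConst]
    field_simp
    ring
  rw [← ENNReal.coe_inj, ENNReal.coe_inv (by positivity)] at this
  exact_mod_cast this

namespace IsPISpace

variable {D A : ℝ≥0} {p : ℕ}

/-- Off the heavy centers, the set `K` is too small in `ball x R` for `P` and its complement to
share a smaller ball: this is the relative isoperimetric inequality. -/
lemma mostlyIn_or_of_notMem_heavyCenters [BorelSpace T] (h : IsPISpace μ D A p) {K P : Set T}
    {x : T} {R : ℝ} (hR : 0 < R) (hP : MeasurableSet P) (hsep : SeparatesIn K P (ball x R))
    (hx : x ∉ heavyCenters μ (levelConst D A p) K R) :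
    MostlyIn μ (4 * D ^ 2)⁻¹ (ball x (R / 2 ^ (p + 1))) P ∨
      MostlyIn μ (4 * D ^ 2)⁻¹ (ball x (R / 2 ^ (p + 1))) Pᶜ := by
  set ε := R / 2 ^ (p + 1) with hε_def
  have hε : 0 < ε := by positivity
  have hεR : 2 ^ (p + 1) * ε = R := by rw [hε_def]; field_simp
  have hD : 0 < D := zero_lt_one.trans_le (h.one_le x)
  obtain ⟨ι, _, c, r, hr, hrε, hcover, hlt⟩ := exists_cover_of_codimH_lt (not_le.1 hx) hε
  have hεR' : 2 ^ p * ε < R := by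
    have : 0 < 2 ^ p * ε := by positivity
    rw [← hεR, pow_succ]
    linarith
  have hmin := h.min_measure_diff_inter_le hε hεR' hP hsep hr hrε hcover
  rw [MostlyIn, MostlyIn, Set.sdiff_compl, ← min_le_iff]
  calc _ ≤ (4 * A + 1) * D * ENNReal.ofReal ε *
          (levelConst D A p * (μ (ball x R) / ENNReal.ofReal R)) := hmin.trans (by gcongr)
    _ ≤ (4 * A + 1) * D * ENNReal.ofReal R *
          (levelConst D A p * (D ^ (p + 1) * μ (ball x ε) / ENNReal.ofReal R)) := by
        gcongr
        · exact div_le_self hR.le (one_le_pow₀ one_le_two)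
        · exact hεR ▸ h.measure_ball_two_pow_mul_le x ε (p + 1)
    _ = (4 * A + 1) * D * levelConst D A p * D ^ (p + 1) * μ (ball x ε) *
          (ENNReal.ofReal R / ENNReal.ofReal R) := by
        simp only [ENNReal.div_eq_inv_mul]
        ring
    _ = (4 * (D : ℝ≥0∞) ^ 2)⁻¹ * μ (ball x ε) := by
        rw [ENNReal.div_self (by simpa using hR) ENNReal.ofReal_ne_top, mul_one,
          mul_levelConst_mul hD]

lemma not_mostlyIn_compl_of_mostlyIn (h : IsPISpace μ D A p) {x y : T} {ε : ℝ} (hε : 0 < ε)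
    (hxy : dist x y < ε / 2) {P : Set T} (hx : MostlyIn μ (4 * D ^ 2)⁻¹ (ball x ε) P) :
    ¬ MostlyIn μ (4 * D ^ 2)⁻¹ (ball y ε) Pᶜ := by
  intro hy
  have hD : 1 ≤ (D : ℝ≥0∞) := mod_cast h.one_le x
  set b := μ (ball x (ε / 2))
  have ball_le {z : T} (hz : dist z x < ε / 2) : μ (ball z ε) ≤ D ^ 2 * b :=
    (measure_mono (ball_subset_ball' (by linarith))).trans
      (h.measure_ball_two_pow_mul_le x (ε / 2) 2)
  have hcover : ball x (ε / 2) ⊆ (ball x ε \ P) ∪ (ball y ε \ Pᶜ) := by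
    intro z hz
    by_cases hzP : z ∈ P
    · exact .inr ⟨ball_subset_ball' (by linarith) hz, not_not.2 hzP⟩
    · exact .inl ⟨ball_subset_ball (by linarith) hz, hzP⟩
  have hquarter : ((4 : ℝ≥0∞) * D ^ 2)⁻¹ * (D ^ 2 * b) = b / 2 / 2 := by
    have hD0 : (D : ℝ≥0∞) ^ 2 ≠ 0 := pow_ne_zero _ (zero_lt_one.trans_le hD).ne'
    rw [ENNReal.mul_inv (by simp) (by simp), mul_assoc, ← mul_assoc _ _ b,
      ENNReal.inv_mul_cancel hD0 (by finiteness), one_mul, div_eq_mul_inv,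
      div_eq_mul_inv, mul_assoc b, ← ENNReal.mul_inv (by simp) (by simp), mul_comm b]
    norm_num
  have hle : b ≤ b / 2 :=
    calc b ≤ μ (ball x ε \ P) + μ (ball y ε \ Pᶜ) :=
          (measure_mono hcover).trans (measure_union_le _ _)
      _ ≤ b / 2 / 2 + b / 2 / 2 := by
          rw [← hquarter]
          exact add_le_add (hx.trans (by gcongr; exact ball_le (by simpa using half_pos hε)))
            (hy.trans (by gcongr; exact ball_le (by rwa [dist_comm])))
      _ = b / 2 := ENNReal.add_halves _
  exact hle.not_gt (ENNReal.half_lt_self (h.measure_ball_pos x (half_pos hε)).ne'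
    (h.measure_ball_lt_top x _).ne)

end IsPISpace

end HeavyBalls

section PositiveSide

variable {T : Type*} [MetricSpace T] {w : T → UnitAddCircle}

lemma separatesIn_setOf_angle_nonneg (hw : Continuous w) {V : Set T}
    (hV : ∀ x ∈ V, ‖w x‖ < 1 / 2) : SeparatesIn (w ⁻¹' {0}) {x | 0 ≤ angle (w x)} V := by
  intro γ hγ hne
  have hcont : ContinuousOn (fun t => angle (w (γ.toFun t))) (uIcc γ.a γ.b) := by
    rw [uIcc_of_le γ.hab]
    intro t ht
    exact ContinuousAt.comp_continuousWithinAt (g := angle) (f := w ∘ γ.toFun)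
      (continuousAt_angle (hV _ (hγ t ht))) (hw.comp_continuousOn γ.lip.continuousOn t ht)
  have hzero : (0 : ℝ) ∈ uIcc (angle (w γ.start)) (angle (w γ.finish)) := by
    rw [mem_ofPred_eq, mem_ofPred_eq] at hne
    rw [mem_uIcc]
    rcases le_or_gt 0 (angle (w γ.start)) with h₀ | h₀
    · exact .inr ⟨(not_le.1 fun h₁ => hne (iff_of_true h₀ h₁)).le, h₀⟩
    · exact .inl ⟨h₀.le, not_lt.1 fun h₁ => hne (iff_of_false h₀.not_ge h₁.not_ge)⟩
  obtain ⟨t, ht, htw⟩ := intermediate_value_uIcc hcont hzero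
  exact ⟨t, uIcc_of_le γ.hab ▸ ht, angle_eq_zero.1 htw⟩

variable [MeasurableSpace T] {μ : Measure T} {D A : ℝ≥0} {p : ℕ} {R : ℝ}

/-- The side of the level set `w⁻¹{0}` on which the angle of `w` is nonnegative, decided by the
majority in the ball of radius `ε` where the level set is near. -/
def positiveSide (μ : Measure T) (θ : ℝ≥0∞) (w : T → UnitAddCircle) (ε : ℝ) : Set T :=
  {x | if 1 / 4 ≤ ‖w x‖ then 0 ≤ angle (w x) else MostlyIn μ θ (ball x ε) {y | 0 ≤ angle (w y)}}

lemma mem_positiveSide_of_le {θ : ℝ≥0∞} {ε : ℝ} {x : T} (hx : 1 / 4 ≤ ‖w x‖) :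
    x ∈ positiveSide μ θ w ε ↔ 0 ≤ angle (w x) :=
  iff_of_eq (if_pos hx)

lemma mem_positiveSide_of_lt {θ : ℝ≥0∞} {ε : ℝ} {x : T} (hx : ‖w x‖ < 1 / 4) :
    x ∈ positiveSide μ θ w ε ↔ MostlyIn μ θ (ball x ε) {y | 0 ≤ angle (w y)} :=
  iff_of_eq (if_neg hx.not_ge)

namespace IsPISpace

lemma mostlyIn_of_notMem_heavyCenters [BorelSpace T] (h : IsPISpace μ D A p) (hw : Continuous w)
    (hR : 0 < R) (hosc : ∀ x y, dist x y < R → dist (w x) (w y) < 1 / 16) {x : T}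
    (hx : x ∉ heavyCenters μ (levelConst D A p) (w ⁻¹' {0}) R) (hxw : ‖w x‖ < 7 / 16) :
    (x ∈ positiveSide μ (4 * D ^ 2)⁻¹ w (R / 2 ^ (p + 1)) →
      MostlyIn μ (4 * D ^ 2)⁻¹ (ball x (R / 2 ^ (p + 1))) {y | 0 ≤ angle (w y)}) ∧
    (x ∉ positiveSide μ (4 * D ^ 2)⁻¹ w (R / 2 ^ (p + 1)) →
      MostlyIn μ (4 * D ^ 2)⁻¹ (ball x (R / 2 ^ (p + 1))) {y | 0 ≤ angle (w y)}ᶜ) := by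
  have hεR : R / 2 ^ (p + 1) ≤ R := div_le_self hR.le (one_le_pow₀ one_le_two)
  have hball {r : ℝ} (hr : r ≤ R) : ∀ y ∈ ball x r, dist (w x) (w y) < 1 / 16 := fun y hy =>
    hosc x y ((dist_comm x y).trans_lt ((mem_ball.1 hy).trans_le hr))
  rcases le_or_gt (1 / 4) ‖w x‖ with hfar | hnear
  · have hsign : ∀ y ∈ ball x (R / 2 ^ (p + 1)), (0 ≤ angle (w x) ↔ 0 ≤ angle (w y)) :=
      fun y hy => angle_nonneg_iff_of_dist_lt ((hball hεR y hy).trans (by linarith))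
        ((hball hεR y hy).trans (by linarith))
    rw [mem_positiveSide_of_le hfar]
    exact ⟨fun h₀ => mostlyIn_of_subset fun y hy => (hsign y hy).1 h₀,
      fun h₀ => mostlyIn_of_subset fun y hy => mt (hsign y hy).2 h₀⟩
  · rw [mem_positiveSide_of_lt hnear]
    have hsep : SeparatesIn (w ⁻¹' {0}) {y | 0 ≤ angle (w y)} (ball x R) := by
      refine separatesIn_setOf_angle_nonneg hw fun y hy => ?_
      linarith [hball le_rfl y hy, norm_le_norm_add_norm_sub (w x) (w y),
        (dist_eq_norm (w x) (w y)).symm]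
    exact ⟨id, (h.mostlyIn_or_of_notMem_heavyCenters hR
      ((measurable_angle.comp hw.measurable) measurableSet_Ici) hsep hx).resolve_left⟩

theorem isSideOff_positiveSide [BorelSpace T] (h : IsPISpace μ D A p) (hw : Continuous w)
    (hR : 0 < R) (hosc : ∀ x y, dist x y < R → dist (w x) (w y) < 1 / 16) :
    IsSideOff w R (heavyCenters μ (levelConst D A p) (w ⁻¹' {0}) R)
      (positiveSide μ (4 * D ^ 2)⁻¹ w (R / 2 ^ (p + 1))) where
  norm_lt x hx := by
    obtain ⟨z, hz, hxz⟩ := mem_thickening_iff.1 hx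
    have hC : (levelConst D A p : ℝ≥0∞) ≠ 0 :=
      ENNReal.coe_ne_zero.2 (levelConst_pos (one_pos.trans_le (h.one_le z)) A p).ne'
    obtain ⟨y, hyw, hy⟩ := inter_ball_nonempty_of_mem_heavyCenters hC (h.measure_ball_pos z hR) hz
    calc ‖w x‖ = dist (w x) (w y) := by rw [mem_singleton_iff.1 hyw, dist_zero_right]
      _ ≤ dist (w x) (w z) + dist (w y) (w z) := dist_triangle_right _ _ _
      _ < 1 / 16 + 1 / 16 := add_lt_add (hosc x z hxz) (hosc y z hy)
      _ < 1 / 4 := by norm_num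
  mem_iff x hx := mem_positiveSide_of_le hx
  locally_const x hx := by
    have hε : 0 < R / 2 ^ (p + 1) := by positivity
    set ε := R / 2 ^ (p + 1)
    have hεR : ε ≤ R := div_le_self hR.le (one_le_pow₀ one_le_two)
    have hnorm {y : T} (hy : y ∈ ball x (ε / 4)) : ‖w y‖ < 7 / 16 := by
      have := hosc y x ((mem_ball.1 hy).trans (by linarith))
      rw [dist_eq_norm] at this
      linarith [norm_le_norm_add_norm_sub' (w y) (w x)]
    refine ⟨ball x (ε / 4), ball_mem_nhds x (by positivity), ?_⟩
    suffices key : ∀ y ∈ ball x (ε / 4) \ heavyCenters μ (levelConst D A p) (w ⁻¹' {0}) R,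
        ∀ z ∈ ball x (ε / 4) \ heavyCenters μ (levelConst D A p) (w ⁻¹' {0}) R,
        y ∈ positiveSide μ (4 * D ^ 2)⁻¹ w ε → z ∈ positiveSide μ (4 * D ^ 2)⁻¹ w ε from
      fun y hy z hz => ⟨key y hy z hz, key z hz y hy⟩
    intro y hy z hz hyQ
    by_contra hzQ
    have hyz : dist y z < ε / 2 := by
      linarith [dist_triangle_right y z x, mem_ball.1 hy.1, mem_ball.1 hz.1]
    exact h.not_mostlyIn_compl_of_mostlyIn hε hyz
      ((h.mostlyIn_of_notMem_heavyCenters hw hR hosc hy.2 (hnorm hy.1)).1 hyQ)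
      ((h.mostlyIn_of_notMem_heavyCenters hw hR hosc hz.2 (hnorm hz.1)).2 hzQ)

end IsPISpace

end PositiveSide

section DisjointBalls

lemma exists_disjoint_balls {X : Type*} [PseudoMetricSpace X] {G : Set X} (hG : TotallyBounded G)
    {R : ℝ} (hR : 0 < R) :
    ∃ (m : ℕ) (z : Fin m → X), (∀ i, z i ∈ G) ∧
      Pairwise (Function.onFun Disjoint fun i => ball (z i) R) ∧
        G ⊆ ⋃ i, closedBall (z i) (2 * R) := by
  lift R to ℝ≥0 using hR.le
  have hpack : packingNumber (2 * R) G ≠ ⊤ := by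
    obtain ⟨t, -, htfin, ht⟩ := exists_finite_isCover_of_totallyBounded (by simpa using hR.ne') hG
    exact ((packingNumber_two_mul_le_externalCoveringNumber R G).trans
      ht.externalCoveringNumber_le_encard |>.trans_lt htfin.encard_lt_top).ne
  have hfin : (maximalSeparatedSet (2 * R) G).Finite := by
    rwa [← Set.encard_ne_top_iff, encard_maximalSeparatedSet hpack]
  have := hfin.fintype
  set e := Fintype.equivFin (maximalSeparatedSet (2 * R) G)
  refine ⟨_, fun i => e.symm i, fun i => maximalSeparatedSet_subset (e.symm i).2,
    fun i j hij => ball_disjoint_ball ?_, fun x hx => ?_⟩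
  · have hlt : (2 * R : ℝ≥0) < edist (e.symm i : X) (e.symm j) :=
      isSeparated_maximalSeparatedSet (e.symm i).2 (e.symm j).2
        fun h => hij (e.symm.injective (Subtype.ext h))
    rw [edist_nndist, ENNReal.coe_lt_coe] at hlt
    exact (two_mul (R : ℝ)).symm.trans_le (mod_cast hlt.le)
  · obtain ⟨y, hy, hxy⟩ := mem_iUnion₂.1 (isCover_iff_subset_iUnion_closedBall.1
      (isCover_maximalSeparatedSet hpack) hx)
    exact mem_iUnion.2 ⟨e ⟨y, hy⟩, by simpa using hxy⟩

variable {T : Type*} [MetricSpace T]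

lemma indicator_thickening_le_sum {G : Set T} {R : ℝ} (hR : 0 < R) {m : ℕ} {z : Fin m → T}
    (hG : G ⊆ ⋃ i, closedBall (z i) (2 * R)) (c : ℝ≥0∞) :
    (thickening R G).indicator (fun _ => c) ≤
      fun x => c * ∑ i, (ball (z i) (5 * R)).indicator (fun _ => 1) x := by
  refine indicator_le' (fun x hx => ?_) (fun _ _ => zero_le)
  obtain ⟨y, hy, hxy⟩ := mem_thickening_iff.1 hx
  obtain ⟨i, hi⟩ := mem_iUnion.1 (hG hy)
  have hxi : x ∈ ball (z i) (5 * R) := by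
    have := dist_triangle x y (z i)
    rw [mem_closedBall] at hi
    rw [mem_ball]
    linarith
  refine le_mul_of_one_le_right' ?_
  calc (1 : ℝ≥0∞) = (ball (z i) (5 * R)).indicator (fun _ => 1) x := by
        rw [indicator_of_mem hxi]
    _ ≤ ∑ i, (ball (z i) (5 * R)).indicator (fun _ => 1) x :=
        Finset.single_le_sum (f := fun i => (ball (z i) (5 * R)).indicator (fun _ => 1) x)
          (fun _ _ => zero_le) (Finset.mem_univ i)

variable [MeasurableSpace T] {μ : Measure T} {D A : ℝ≥0} {p : ℕ} {x₀ : T}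
  {α₀ : Path x₀ x₀} {w : T → UnitAddCircle} {k : ℤ}

lemma mem_heavyCenters_one_div {C : ℝ≥0∞} {S : Set T} {n : ℕ} (hn : 0 < n) {x : T} :
    x ∈ heavyCenters μ C S (1 / n) ↔
      C * n * μ (ball x (1 / n)) ≤ codimH μ (S ∩ ball x (1 / n)) := by
  rw [heavyCenters, mem_ofPred_eq, one_div (n : ℝ),
    ENNReal.ofReal_inv_of_pos (Nat.cast_pos.2 hn), ENNReal.ofReal_natCast, div_eq_mul_inv, inv_inv,
    mul_comm (μ _), mul_assoc]

theorem IsPISpace.exists_disjoint_balls_of_hasDegree [CompactSpace T] [BorelSpace T]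
    (h : IsPISpace μ D A p) (hw : HasDegree x₀ α₀ w k) {R : ℝ} (hR : 0 < R)
    (hosc : ∀ x y, dist x y < R → dist (w x) (w y) < 1 / 16) :
    ∃ (m : ℕ) (z : Fin m → T), Pairwise (Function.onFun Disjoint fun i => ball (z i) R) ∧
      (∀ i, z i ∈ heavyCenters μ (levelConst D A p) (w ⁻¹' {0}) R) ∧
      ∃ ψ : T → UnitAddCircle, (∃ L : ℝ≥0, LipschitzWith L ψ) ∧ HasDegree x₀ α₀ ψ k ∧
        IsUpperGradient ψ fun x =>
          ENNReal.ofReal R⁻¹ * ∑ i, (ball (z i) (5 * R)).indicator (fun _ => 1) x := by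
  obtain ⟨ψ, hlip, hdeg, hug⟩ :=
    (h.isSideOff_positiveSide hw.1 hR hosc).exists_lipschitz_hasDegree hR hw
  obtain ⟨m, z, hz, hdisj, hcover⟩ :=
    exists_disjoint_balls ((isCompact_univ (X := T)).totallyBounded.subset (subset_univ _)) hR
  exact ⟨m, z, hdisj, hz, ψ, hlip, hdeg, hug.mono (indicator_thickening_le_sum hR hcover _)⟩

end DisjointBalls

end Duality

open Duality in
theorem statement11_general (Cμ : ℝ≥0∞) (CP lP : ℝ) :
    ∃ C : ℝ≥0∞, 0 < C ∧ C < ⊤ ∧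
      ∀ (T : Type*) [MetricSpace T] [MeasurableSpace T] [BorelSpace T] [CompactSpace T]
        (μ : Measure T) (x₀ : T) (α₀ : Path x₀ x₀), IsDoubling μ Cμ → SupportsPoincare μ CP lP →
        IsGenerator x₀ α₀ → (∃ f : T → UnitAddCircle, HasDegree x₀ α₀ f 1) →
        ∀ (φ : T → UnitAddCircle) (k : ℤ), k ≠ 0 → HasDegree x₀ α₀ φ k →
          ∃ N : ℕ, ∀ n : ℕ, N ≤ n →
            ∃ (m : ℕ) (z : Fin m → T),
              (∀ i j : Fin m, i ≠ j →
                Disjoint (ball (z i) (1 / (n : ℝ))) (ball (z j) (1 / (n : ℝ)))) ∧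
              (∀ i : Fin m,
                C * (n : ℝ≥0∞) * μ (ball (z i) (1 / (n : ℝ))) ≤
                  codimH μ (φ ⁻¹' {0} ∩ ball (z i) (1 / (n : ℝ)))) ∧
              ∃ ψ : T → UnitAddCircle, DegOneLip x₀ α₀ ψ ∧
                IsUpperGradient ψ fun x => (n : ℝ≥0∞) *
                  ∑ i : Fin m, (ball (z i) (5 / (n : ℝ))).indicator
                    (fun _ => (1 : ℝ≥0∞)) x := by
  obtain ⟨D, A, p, hD, hspace⟩ := exists_isPISpace Cμ CP lP
  refine ⟨levelConst D A p, mod_cast levelConst_pos hD A p, ENNReal.coe_lt_top, ?_⟩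
  intro T _ _ _ _ μ x₀ α₀ hdoubling hpoincare hgen ⟨f, hf⟩ φ k hk hφ
  have h := hspace hdoubling hpoincare
  have : Nonempty T := ⟨x₀⟩
  have := h.pathConnectedSpace
  have := h.locallyPathConnectedSpace
  obtain ⟨w, hw, hwφ⟩ := hf.exists_root hφ hgen hk
  have hlevel : w ⁻¹' {0} ⊆ φ ⁻¹' {0} := fun x hx => by
    rw [← hwφ, mem_preimage, Pi.smul_apply, mem_singleton_iff.1 hx, smul_zero, mem_singleton_iff]
  obtain ⟨δ, hδ, hosc⟩ := Metric.uniformContinuous_iff.1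
    (CompactSpace.uniformContinuous_of_continuous hw.1) (1 / 16) (by norm_num)
  obtain ⟨N, hN⟩ := eventually_atTop.1 ((eventually_gt_atTop 0).and
    (tendsto_one_div_atTop_nhds_zero_nat.eventually_lt_const hδ))
  refine ⟨N, fun n hn => ?_⟩
  obtain ⟨hn, hnδ⟩ := hN n hn
  obtain ⟨m, z, hdisj, hz, ψ, hlip, hdeg, hug⟩ := h.exists_disjoint_balls_of_hasDegree hw
    (one_div_pos.2 (Nat.cast_pos.2 hn)) fun x y hxy => hosc (hxy.trans hnδ)
  refine ⟨m, z, fun i j hij => hdisj hij, fun i => ?_, ψ, ⟨hlip, hdeg⟩, ?_⟩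
  · exact ((mem_heavyCenters_one_div hn).1 (hz i)).trans
      (codimH_mono μ (inter_subset_inter_left _ hlevel))
  · simpa only [one_div, inv_inv, ENNReal.ofReal_natCast, ← div_eq_mul_inv] using hug

open Duality in
/-- **Proposition 4.5.** From a continuous map of positive degree one obtains disjoint
balls on which the level set has large codimension 1 measure, together with a Lipschitz
map of degree 1 whose upper gradient is `n ∑ χ_{5Bᵢ}`. -/
theorem statement11 (Cμ : ℝ≥0∞) (CP lP : ℝ) :
    ∃ C : ℝ≥0∞, 0 < C ∧ C < ⊤ ∧
      ∀ (T : Type) [MetricSpace T] [MeasurableSpace T] [BorelSpace T] [CompactSpace T]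
        (μ : Measure T) (x₀ : T) (α₀ : Path x₀ x₀),
        Standing μ Cμ CP lP x₀ α₀ →
        ∀ (φ : T → UnitAddCircle) (k : ℤ), 0 < k → HasDegree x₀ α₀ φ k →
          ∃ N : ℕ, ∀ n : ℕ, N ≤ n →
            ∃ (m : ℕ) (z : Fin m → T),
              (∀ i j : Fin m, i ≠ j →
                Disjoint (ball (z i) (1 / (n : ℝ))) (ball (z j) (1 / (n : ℝ)))) ∧
              (∀ i : Fin m,
                C * (n : ℝ≥0∞) * μ (ball (z i) (1 / (n : ℝ))) ≤
                  codimH μ (φ ⁻¹' {0} ∩ ball (z i) (1 / (n : ℝ)))) ∧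
              ∃ ψ : T → UnitAddCircle, DegOneLip x₀ α₀ ψ ∧
                IsUpperGradient ψ fun x => (n : ℝ≥0∞) *
                  ∑ i : Fin m, (ball (z i) (5 / (n : ℝ))).indicator
                    (fun _ => (1 : ℝ≥0∞)) x := by
  obtain ⟨C, hC, hC', h⟩ := statement11_general Cμ CP lP
  exact ⟨C, hC, hC', fun T _ _ _ _ μ x₀ α₀ ⟨hdoubling, hpoincare, _, hgen, f, hf⟩ φ k hk =>
    h T μ x₀ α₀ hdoubling hpoincare hgen ⟨f, hf.2⟩ φ k hk.ne'⟩
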